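/- Fix integers m ≥ 2, s ≥ 4, d ≥ 2s+2 and b with 2 ≤ b ≤ s. Fix a line L ⊂ ℙ^m, a connected zero-dimensional subscheme Z' ⊂ L with deg(Z') = b, and a finite set E ⊂ ℙ^m ∖ L with #E = s−b. Let O ∈ ⟨ν_d(Z' ∪ E)⟩ be any point such that O ∉ ⟨ν_d(F)⟩ for every closed subscheme F ⊊ Z' ∪ E (such O exists since Z' ∪ E is curvilinear). Then br(O) = s and sr(O) = (d+2−b) + (s−b); moreover, if A' ⊂ L evinces the symmetric rank of the point Q := ⟨{O} ∪ ν_d(E)⟩ ∩ ⟨ν_d(L)⟩ with respect to the rational normal curve ν_d(L), then A' ∪ E evinces sr(O). -/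

import Mathlib

open scoped LinearAlgebra.Projectivization

noncomputable section

/-- The polynomial ring in `m+1` variables over `K`: homogeneous coordinate ring of `ℙ^m`. -/
abbrev PR (K : Type) [Field K] (m : ℕ) : Type := MvPolynomial (Fin (m+1)) K

/-- The space of degree-`d` forms in `m+1` variables. -/
abbrev Hd (K : Type) [Field K] (m d : ℕ) : Submodule K (PR K m) :=
  MvPolynomial.homogeneousSubmodule (Fin (m+1)) K d

/-- Projective `m`-space over `K`. -/
abbrev Pm (K : Type) [Field K] (m : ℕ) := ℙ K (Fin (m+1) → K)

/-- The target projective space `ℙ^n`, `n = C(m+d,m) - 1`, of the degree-`d` Veronese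
embedding, realized as the projectivization of the dual of the space of degree-`d` forms
(the space of degree-`d` symmetric tensors). -/
abbrev PN (K : Type) [Field K] (m d : ℕ) := ℙ K (Module.Dual K (Hd K m d))

variable {K : Type} [Field K] {m : ℕ}

/-- Hilbert function of `R/I` in degree `t`. -/
def hilbQ (I : Ideal (PR K m)) (t : ℕ) : ℕ :=
  Module.finrank K ((Hd K m t).map (Ideal.Quotient.mkₐ K I).toLinearMap)

/-- The degree (length) of the projective scheme defined by `I`: the eventual value of the
Hilbert function of `R/I`. -/
def idealDeg (I : Ideal (PR K m)) : ℕ := Filter.limsup (fun t => hilbQ I t) Filter.atTop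

/-- `h^1(𝓘_Z(d))` for the zero-dimensional scheme `Z` with (saturated) ideal `I`:
it equals `deg Z - dim (R/I)_d`. -/
def h1I (I : Ideal (PR K m)) (d : ℕ) : ℕ := idealDeg I - hilbQ I d

/-- An ideal is homogeneous. -/
def IsHomogI (I : Ideal (PR K m)) : Prop :=
  ∀ f ∈ I, ∀ n : ℕ, MvPolynomial.homogeneousComponent n f ∈ I

/-- An ideal is saturated with respect to the irrelevant maximal ideal. -/
def IsSatI (I : Ideal (PR K m)) : Prop :=
  ∀ f : PR K m, (∀ i, MvPolynomial.X i * f ∈ I) → f ∈ I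

/-- A closed subscheme of `ℙ^m`, given by its saturated homogeneous ideal. -/
structure PSub (K : Type) [Field K] (m : ℕ) where
  I : Ideal (PR K m)
  homog : IsHomogI I
  sat : IsSatI I

/-- A (closed sub)scheme is zero-dimensional iff the Hilbert function of `R/I` is bounded. -/
def IsZeroDimI (I : Ideal (PR K m)) : Prop := ∃ C, ∀ t, hilbQ I t ≤ C

/-- A polynomial vanishes at a projective point (every homogeneous component vanishes
at a representative). -/
def vanishesAt (f : PR K m) (a : Pm K m) : Prop :=
  ∀ n : ℕ, MvPolynomial.eval a.rep (MvPolynomial.homogeneousComponent n f) = 0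

/-- Zero locus of an ideal in `ℙ^m`. -/
def pzeroLocus (I : Ideal (PR K m)) : Set (Pm K m) := {a | ∀ f ∈ I, vanishesAt f a}

/-- The (saturated) homogeneous ideal of a set of points of `ℙ^m`. -/
def idealOfSet (S : Set (Pm K m)) : Ideal (PR K m) :=
  Ideal.span {f : PR K m | (∃ n, f.IsHomogeneous n) ∧ ∀ a ∈ S, MvPolynomial.eval a.rep f = 0}

/-- Saturation of a homogeneous ideal: the smallest saturated homogeneous ideal containing it. -/
def satIdeal (J : Ideal (PR K m)) : Ideal (PR K m) := sInf {J' | J ≤ J' ∧ IsHomogI J' ∧ IsSatI J'}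

/-- The scheme defined by the (saturated) ideal `I` is reduced. -/
def IsReducedI (I : Ideal (PR K m)) : Prop := I = idealOfSet (pzeroLocus I)

/-- Connected component of a zero-dimensional scheme at a point `a`: the largest subscheme
supported at `a`, i.e. the `a`-primary component. -/
def componentAt (I : Ideal (PR K m)) (a : Pm K m) : Ideal (PR K m) :=
  sInf {J | I ≤ J ∧ IsHomogI J ∧ IsSatI J ∧ pzeroLocus J ⊆ {a}}

/-- Residual scheme of `Z` with respect to the hypersurface `f = 0`: the colon ideal `(I_Z : f)`. -/
def resIdeal (I : Ideal (PR K m)) (f : PR K m) : Ideal (PR K m) :=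
  Submodule.colon I (Ideal.span {f})

/-- Degree of the scheme-theoretic intersection of the subschemes defined by `I` and `J`. -/
def interDeg (I J : Ideal (PR K m)) : ℕ := idealDeg (I ⊔ J)

/-- The degree-`d` Veronese image of a vector `v`: the evaluation-at-`v` functional on
degree-`d` forms. -/
def nu (d : ℕ) (v : Fin (m+1) → K) : Module.Dual K (Hd K m d) :=
  (MvPolynomial.aeval v).toLinearMap ∘ₗ (Hd K m d).subtype

/-- The linear span of the Veronese image `ν_d(S)` of a set `S` of points of `ℙ^m`. -/
def dualSpan (d : ℕ) (S : Set (Pm K m)) : Submodule K (Module.Dual K (Hd K m d)) :=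
  Submodule.span K ((fun a => nu d a.rep) '' S)

/-- The linear span `⟨ν_d(Z)⟩` of the Veronese image of the subscheme with ideal `I`:
the annihilator of the degree-`d` part of `I`. -/
def schemeSpanSub (I : Ideal (PR K m)) (d : ℕ) : Submodule K (Module.Dual K (Hd K m d)) where
  carrier := {φ | ∀ f : Hd K m d, (f : PR K m) ∈ I → φ f = 0}
  add_mem' := by
    intro a b ha hb f hf
    simp [LinearMap.add_apply, ha f hf, hb f hf]
  zero_mem' := by intro f hf; simp
  smul_mem' := by
    intro c a ha f hf
    simp [LinearMap.smul_apply, ha f hf]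

/-- `P ∈ ⟨ν_d(Z)⟩`, for `Z` the subscheme with ideal `I`. -/
def inSpanI (I : Ideal (PR K m)) (d : ℕ) (P : PN K m d) : Prop := P.rep ∈ schemeSpanSub I d

/-- `P ∈ ⟨ν_d(S)⟩` for a set `S` of points of `ℙ^m`. -/
def inSpanSet (d : ℕ) (S : Set (Pm K m)) (P : PN K m d) : Prop := P.rep ∈ dualSpan d S

/-- `L` is a linear subspace of `ℙ^m`. -/
def IsLinearSub (L : Set (Pm K m)) : Prop :=
  ∃ W : Submodule K (Fin (m+1) → K), L = {a | a.submodule ≤ W}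

/-- `L` is a line of `ℙ^m`. -/
def IsLine (L : Set (Pm K m)) : Prop :=
  ∃ W : Submodule K (Fin (m+1) → K), Module.finrank K W = 2 ∧ L = {a | a.submodule ≤ W}

/-- `L` is a plane of `ℙ^m`. -/
def IsPlane (L : Set (Pm K m)) : Prop :=
  ∃ W : Submodule K (Fin (m+1) → K), Module.finrank K W = 3 ∧ L = {a | a.submodule ≤ W}

/-- `J` is the (saturated homogeneous) ideal of a conic of `ℙ^m`: a degree-2 curve contained
in a plane (possibly reducible). -/
def IsConic (J : Ideal (PR K m)) : Prop :=
  ∃ (W : Submodule K (Fin (m+1) → K)) (q : PR K m),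
    Module.finrank K W = 3 ∧ q.IsHomogeneous 2 ∧
    q ∉ idealOfSet {a : Pm K m | a.submodule ≤ W} ∧
    J = satIdeal (idealOfSet {a : Pm K m | a.submodule ≤ W} ⊔ Ideal.span {q})

/-- The algebra of polynomial functions on a `K`-vector space. -/
def polyFunctions (K V : Type) [Field K] [AddCommGroup V] [Module K V] : Subalgebra K (V → K) :=
  Algebra.adjoin K {g : V → K | ∃ φ : V →ₗ[K] K, g = ⇑φ}

/-- Zariski closure of a subset of a projective space. -/
def zClosure {V : Type} [AddCommGroup V] [Module K V] (T : Set (ℙ K V)) : Set (ℙ K V) :=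
  {P | ∀ F ∈ polyFunctions K V, (∀ Q ∈ T, ∀ c : K, F (c • Q.rep) = 0) →
    ∀ c : K, F (c • P.rep) = 0}

/-- The Veronese variety `X_{m,d} = ν_d(ℙ^m)` as a subset of `PN K m d`. -/
def XSet (K : Type) [Field K] (m d : ℕ) : Set (PN K m d) :=
  {Q | ∃ a : Pm K m, Q.submodule = Submodule.span K {nu d a.rep}}

/-- The image `ν_d(S)` of a set of points of `ℙ^m`, as a subset of `PN K m d`. -/
def nuSet (d : ℕ) (S : Set (Pm K m)) : Set (PN K m d) :=
  {Q | ∃ a ∈ S, Q.submodule = Submodule.span K {nu d a.rep}}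

/-- The rank of a point `P` of `PN` with respect to a subset `Y ⊆ PN`. -/
def rankWrt {m d : ℕ} (Y : Set (PN K m d)) (P : PN K m d) : ℕ :=
  sInf {r | ∃ S : Finset (PN K m d), ↑S ⊆ Y ∧ S.card = r ∧
    P.rep ∈ Submodule.span K (Projectivization.rep '' (S : Set (PN K m d)))}

/-- The `s`-th secant variety of `Y ⊆ PN`: the Zariski closure of the union of the spans
of `s` points of `Y`. -/
def secantWrt {m d : ℕ} (Y : Set (PN K m d)) (s : ℕ) : Set (PN K m d) :=
  zClosure {Q | ∃ S : Finset (PN K m d), ↑S ⊆ Y ∧ S.card ≤ s ∧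
    Q.rep ∈ Submodule.span K (Projectivization.rep '' (S : Set (PN K m d)))}

/-- The border rank of `P` with respect to `Y ⊆ PN`. -/
def brankWrt {m d : ℕ} (Y : Set (PN K m d)) (P : PN K m d) : ℕ :=
  sInf {s | 0 < s ∧ P ∈ secantWrt Y s}

/-- Symmetric rank. -/
def srank {m : ℕ} (d : ℕ) (P : PN K m d) : ℕ := rankWrt (XSet K m d) P

/-- Border rank. -/
def brank {m : ℕ} (d : ℕ) (P : PN K m d) : ℕ := brankWrt (XSet K m d) P

/-- Cactus rank: minimal degree of a zero-dimensional closed subscheme `E ⊂ ℙ^m` with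
`P ∈ ⟨ν_d(E)⟩`. -/
def crank {m : ℕ} (d : ℕ) (P : PN K m d) : ℕ :=
  sInf {c | ∃ Z : PSub K m, IsZeroDimI Z.I ∧ idealDeg Z.I = c ∧ inSpanI Z.I d P}

/-- `σ_{s,r}(X_{m,d})`. -/
def sigmaSet (K : Type) [Field K] (m d s r : ℕ) : Set (PN K m d) :=
  {P | brank d P = s ∧ srank d P = r}

/-- A property `Φ` holds for a general `k`-tuple of points of the linear subspace of `ℙ^m`
determined by `W`. -/
def GenerallyOn (W : Submodule K (Fin (m+1) → K)) (k : ℕ)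
    (Φ : (Fin k → Pm K m) → Prop) : Prop :=
  ∃ w : Fin 3 → W, Submodule.span K (Set.range fun j => (w j : Fin (m+1) → K)) = W ∧
    ∃ F : MvPolynomial (Fin k × Fin 3) K, F ≠ 0 ∧
      ∀ c : Fin k → Fin 3 → K,
        MvPolynomial.eval (fun p => c p.1 p.2) F ≠ 0 →
        ∀ e : Fin k → Pm K m,
          (∀ i, (e i).submodule = Submodule.span K {∑ j, c i j • (w j : Fin (m+1) → K)}) → Φ e

end

section part1
open MvPolynomial

/-- linear form from a functional -/
noncomputable def linF {K : Type} [Field K] {m : ℕ} (ξ : (Fin (m+1) → K) →ₗ[K] K) : PR K m :=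
  ∑ i, C (ξ (Pi.single i 1)) * X i

variable {K : Type} [Field K] {m : ℕ}

theorem linF_eval (ξ : (Fin (m+1) → K) →ₗ[K] K) (p : Fin (m+1) → K) : eval p (linF ξ) = ξ p := by
  simp only [linF, map_sum, map_mul, eval_C, eval_X]
  conv_rhs => rw [pi_eq_sum_univ' p, map_sum]
  refine Finset.sum_congr rfl fun i _ => ?_
  rw [map_smul, smul_eq_mul, mul_comm]

theorem linF_homog (ξ : (Fin (m+1) → K) →ₗ[K] K) : (linF ξ).IsHomogeneous 1 := by
  refine IsHomogeneous.sum _ _ _ fun i _ => ?_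
  exact isHomogeneous_C_mul_X _ _

theorem exists_form_notMem (W : Submodule K (Fin (m+1) → K)) (w : Fin (m+1) → K) (hw : w ∉ W) :
    ∃ l : PR K m, l.IsHomogeneous 1 ∧ (∀ p ∈ W, eval p l = 0) ∧ eval w l ≠ 0 := by
  obtain ⟨f, hf, hW⟩ := Submodule.exists_le_ker_of_notMem hw
  refine ⟨linF f, linF_homog f, fun p hp => ?_, ?_⟩
  · rw [linF_eval]; exact hW hp
  · rwa [linF_eval]

theorem exists_form_generic [Infinite K] (W : Submodule K (Fin (m+1) → K)) (B : Finset (Pm K m))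
    (hB : ∀ p ∈ B, p.rep ∉ W) :
    ∃ l : PR K m, l.IsHomogeneous 1 ∧ (∀ p ∈ W, eval p l = 0) ∧ ∀ p ∈ B, eval p.rep l ≠ 0 := by
  obtain ⟨f, hf⟩ := Module.exists_dual_forall_apply_ne_zero (K := K) (fun p : B => W.mkQ p.1.rep)
    (fun p => by simpa using hB p.1 p.2)
  refine ⟨linF (f ∘ₗ W.mkQ), linF_homog _, fun p hp => ?_, fun p hp => ?_⟩
  · rw [linF_eval]; simp [(Submodule.Quotient.mk_eq_zero W).2 hp]
  · rw [linF_eval]; exact hf ⟨p, hp⟩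

theorem rep_notMem_span {p q : Pm K m} (h : p ≠ q) : q.rep ∉ Submodule.span K {p.rep} := by
  intro hq
  obtain ⟨c, hc⟩ := Submodule.mem_span_singleton.1 hq
  apply h
  rw [← Projectivization.mk_rep p, ← Projectivization.mk_rep q, eq_comm,
    Projectivization.mk_eq_mk_iff']
  exact ⟨c, hc⟩

theorem exists_form_at (q : Pm K m) : ∃ l : PR K m, l.IsHomogeneous 1 ∧ eval q.rep l ≠ 0 := by
  obtain ⟨l, h1, -, h2⟩ := exists_form_notMem (⊥ : Submodule K (Fin (m+1) → K)) q.rep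
    (by simpa using q.rep_nonzero)
  exact ⟨l, h1, h2⟩

theorem exists_sep (B : Finset (Pm K m)) (q : Pm K m) (hq : q ∉ B) (t : ℕ) (ht : B.card ≤ t) :
    ∃ f : PR K m, f.IsHomogeneous t ∧ (∀ p ∈ B, eval p.rep f = 0) ∧ eval q.rep f ≠ 0 := by
  classical
  induction B using Finset.induction_on generalizing t with
  | empty =>
    obtain ⟨l, h1, h2⟩ := exists_form_at q
    refine ⟨l ^ t, by simpa using h1.pow t, by simp, by simpa using fun h => absurd h h2⟩
  | insert p B hp ih =>
    rw [Finset.card_insert_of_notMem hp] at ht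
    obtain ⟨t, rfl⟩ : ∃ t', t = t' + 1 := ⟨t - 1, by omega⟩
    simp only [Finset.mem_insert, not_or] at hq
    obtain ⟨f, h1, h2, h3⟩ := ih hq.2 t (by omega)
    obtain ⟨l, l1, l2, l3⟩ := exists_form_notMem _ _ (rep_notMem_span (Ne.symm hq.1))
    refine ⟨f * l, h1.mul l1, ?_, by simp [h3, l3]⟩
    intro r hr
    rw [Finset.mem_insert] at hr
    rcases hr with rfl | hr
    · simp [l2 _ (Submodule.mem_span_singleton_self _)]
    · simp [h2 r hr]

theorem few_points (t : ℕ) (B : Finset (Pm K m)) (c : Pm K m → K) (hc : ∀ p ∈ B, c p ≠ 0)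
    (hrel : ∀ f : PR K m, f.IsHomogeneous t → ∑ p ∈ B, c p * eval p.rep f = 0)
    (hne : B.Nonempty) : t + 2 ≤ B.card := by
  classical
  by_contra hlt
  obtain ⟨q, hq⟩ := hne
  have hcard := Finset.card_erase_of_mem hq
  obtain ⟨f, h1, h2, h3⟩ := exists_sep (B.erase q) q (by simp) t (by omega)
  have := hrel f h1
  rw [Finset.sum_eq_single_of_mem q hq] at this
  · exact mul_ne_zero (hc q hq) h3 this
  · intro p hp hpq
    rw [h2 p (Finset.mem_erase.2 ⟨hpq, hp⟩), mul_zero]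

open scoped Classical in
theorem resid_rel [Infinite K] (t : ℕ) (B : Finset (Pm K m)) (c : Pm K m → K)
    (hc : ∀ p ∈ B, c p ≠ 0) (D : Submodule K (Fin (m+1) → K))
    (hrel : ∀ f : PR K m, f.IsHomogeneous (t+1) → (∀ p ∈ D, eval p f = 0) →
      ∑ p ∈ B, c p * eval p.rep f = 0) :
    ∃ c' : Pm K m → K, (∀ p ∈ B.filter (fun p => p.rep ∉ D), c' p ≠ 0) ∧
      ∀ f : PR K m, f.IsHomogeneous t →
        ∑ p ∈ B.filter (fun p => p.rep ∉ D), c' p * eval p.rep f = 0 := by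
  obtain ⟨l, l1, l2, l3⟩ := exists_form_generic D (B.filter (fun p => p.rep ∉ D))
    (fun p hp => (Finset.mem_filter.1 hp).2)
  refine ⟨fun p => c p * eval p.rep l, fun p hp => mul_ne_zero (hc p (Finset.mem_filter.1 hp).1)
    (l3 p hp), fun f hf => ?_⟩
  have := hrel (f * l) (hf.mul l1) (fun p hp => by simp [l2 p hp])
  rw [Finset.sum_filter]
  refine Eq.trans ?_ this
  refine Finset.sum_congr rfl fun p hp => ?_
  by_cases h : p.rep ∈ D
  · rw [if_neg (not_not.2 h), map_mul, l2 _ h]; ring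
  · rw [if_pos h, map_mul]; ring

open scoped Classical in
theorem line_lemma [Infinite K] (t : ℕ) : ∀ (B : Finset (Pm K m)) (c : Pm K m → K),
    (∀ p ∈ B, c p ≠ 0) →
    (∀ f : PR K m, f.IsHomogeneous t → ∑ p ∈ B, c p * eval p.rep f = 0) →
    B.card ≤ 2 * t + 1 →
    ∃ D : Submodule K (Fin (m+1) → K), Module.finrank K D ≤ 2 ∧ ∀ p ∈ B, p.rep ∈ D := by
  induction t with
  | zero =>
    intro B c hc hrel hB
    rcases B.eq_empty_or_nonempty with rfl | hne
    · exact ⟨⊥, by simp, by simp⟩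
    · have := few_points 0 B c hc hrel hne
      omega
  | succ t ih =>
    intro B c hc hrel hB
    rcases B.eq_empty_or_nonempty with rfl | hne
    · exact ⟨⊥, by simp, by simp⟩
    have h2 := few_points _ B c hc hrel hne
    obtain ⟨p, hp, q, hq, hpq⟩ := Finset.one_lt_card.1 (show 1 < B.card by omega)
    set D0 := Submodule.span K ({p.rep, q.rep} : Set (Fin (m+1) → K)) with hD0
    have hD0r : Module.finrank K D0 ≤ 2 := by
      rw [hD0]
      refine (finrank_span_le_card _).trans ?_
      simpa using Finset.card_le_two
    obtain ⟨c1, hc1, hr1⟩ := resid_rel t B c hc D0 (fun f hf _ => hrel f hf)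
    set B1 := B.filter (fun p => p.rep ∉ D0) with hB1
    have hB1c : B1.card + 2 ≤ B.card := by
      have h' : ({p, q} : Finset (Pm K m)) ⊆ B := by
        intro r hr
        simp only [Finset.mem_insert, Finset.mem_singleton] at hr
        rcases hr with rfl | rfl
        exacts [hp, hq]
      have h'' : B1 ⊆ B \ {p, q} := by
        intro r hr
        obtain ⟨hr1, hr2⟩ := Finset.mem_filter.1 hr
        refine Finset.mem_sdiff.2 ⟨hr1, fun hr => ?_⟩
        simp only [Finset.mem_insert, Finset.mem_singleton] at hr
        rcases hr with rfl | rfl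
        · exact hr2 (Submodule.subset_span (by simp))
        · exact hr2 (Submodule.subset_span (by simp))
      have h1 := Finset.card_le_card h''
      have h3 := Finset.card_sdiff_add_card_eq_card h'
      rw [Finset.card_pair hpq] at h3
      omega
    rcases B1.eq_empty_or_nonempty with h0 | hne1
    · refine ⟨D0, hD0r, fun r hr => ?_⟩
      by_contra hrD
      have : r ∈ B1 := Finset.mem_filter.2 ⟨hr, hrD⟩
      simp [h0] at this
    have h3 := few_points _ B1 c1 hc1 hr1 hne1
    obtain ⟨D, hD, hDB⟩ := ih B1 c1 hc1 hr1 (by omega)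
    obtain ⟨c2, hc2, hr2⟩ := resid_rel t B c hc D (fun f hf _ => hrel f hf)
    set B2 := B.filter (fun p => p.rep ∉ D) with hB2
    have hB2c : B2.card + B1.card ≤ B.card := by
      have h'' : B2 ⊆ B \ B1 := by
        intro r hr
        obtain ⟨hr1, hr2⟩ := Finset.mem_filter.1 hr
        exact Finset.mem_sdiff.2 ⟨hr1, fun hr => hr2 (hDB r hr)⟩
      have h1 := Finset.card_le_card h''
      have h4 := Finset.card_sdiff_add_card_eq_card (Finset.filter_subset (fun p => p.rep ∉ D0) B)
      rw [← hB1] at h4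
      omega
    refine ⟨D, hD, fun r hr => ?_⟩
    by_contra hrD
    have h4 := few_points _ B2 c2 hc2 hr2 ⟨r, Finset.mem_filter.2 ⟨hr, hrD⟩⟩
    omega

end part1

section part2
open MvPolynomial

/-- restriction to the line through `u` and `v` -/
noncomputable def rho {K : Type} [Field K] {m : ℕ} (u v : Fin (m+1) → K) :
    PR K m →ₐ[K] Polynomial K :=
  aeval (fun i => Polynomial.C (u i) + Polynomial.C (v i) * Polynomial.X)

/-- homogenization -/
noncomputable def homg {K : Type} [Field K] {m : ℕ} (x y : PR K m) (M : ℕ) (q : Polynomial K) :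
    PR K m := ∑ i ∈ Finset.range (M+1), C (q.coeff i) * (x ^ i * y ^ (M - i))

variable {K : Type} [Field K] {m : ℕ}

theorem rho_eval (u v : Fin (m+1) → K) (f : PR K m) (τ : K) :
    (rho u v f).eval τ = eval (u + τ • v) f := by
  have : ((Polynomial.aeval τ).comp (rho u v)) = (aeval (u + τ • v) : PR K m →ₐ[K] K) := by
    ext i; simp [rho]; ring
  have h := DFunLike.congr_fun this f
  rw [AlgHom.comp_apply, Polynomial.coe_aeval_eq_eval] at h
  exact h

theorem rho_coeff_zero (u v : Fin (m+1) → K) (f : PR K m) :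
    (rho u v f).coeff 0 = eval u f := by
  rw [Polynomial.coeff_zero_eq_eval_zero, rho_eval]; simp

theorem eval_smul_homog {f : PR K m} {t : ℕ} (hf : f.IsHomogeneous t) (c : K)
    (p : Fin (m+1) → K) : eval (c • p) f = c ^ t * eval p f := by
  rw [eval_eq, eval_eq, Finset.mul_sum]
  refine Finset.sum_congr rfl fun e he => ?_
  have := hf.degree_eq_sum_deg_support he
  simp only [Pi.smul_apply, smul_eq_mul, mul_pow, Finset.prod_mul_distrib]
  rw [Finset.prod_pow_eq_pow_sum, ← this]
  ring

theorem rho_natDegree (u v : Fin (m+1) → K) {f : PR K m} {t : ℕ} (hf : f.IsHomogeneous t) :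
    (rho u v f).natDegree ≤ t := by
  have := MvPolynomial.aeval_natDegree_le (m := t) (n := 1) f hf.totalDegree_le
    (fun i => Polynomial.C (u i) + Polynomial.C (v i) * Polynomial.X) (fun i => by compute_degree)
  simpa [rho] using this

theorem poly_zero_of_ne [Infinite K] (q : Polynomial K) (h : ∀ ε : K, ε ≠ 0 → q.eval ε = 0) :
    q = 0 := by
  apply Polynomial.eq_zero_of_infinite_isRoot
  refine (Set.infinite_of_finite_compl (s := {x : K | x ≠ 0}) ?_).mono fun x hx => h x hx
  convert Set.finite_singleton (0 : K)
  ext; simp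

theorem rho_zero_vanish [Infinite K] (u v : Fin (m+1) → K) {f : PR K m} {t : ℕ}
    (hf : f.IsHomogeneous t) (h0 : rho u v f = 0) (α β : K) : eval (α • u + β • v) f = 0 := by
  have key : ∀ α : K, α ≠ 0 → ∀ β : K, eval (α • u + β • v) f = 0 := by
    intro α hα β
    have h1 : α • u + β • v = α • (u + (α⁻¹ * β) • v) := by
      rw [smul_add, smul_smul, mul_inv_cancel_left₀ hα]
    rw [h1, eval_smul_homog hf, ← rho_eval, h0]; simp
  by_cases hα : α = 0
  · subst hα
    have : rho (β • v) u f = 0 := poly_zero_of_ne _ fun ε hε => by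
      rw [rho_eval, add_comm (β • v)]; exact key ε hε β
    have h2 := rho_eval (β • v) u f 0
    rw [this] at h2
    simpa using h2.symm
  · exact key α hα β

theorem rho_zero_of_vanish [Infinite K] (u v : Fin (m+1) → K) {f : PR K m}
    (h : ∀ τ : K, eval (u + τ • v) f = 0) : rho u v f = 0 :=
  Polynomial.funext fun τ => by rw [rho_eval, h]; simp

theorem rho_linF [Infinite K] (u v : Fin (m+1) → K) (ξ : (Fin (m+1) → K) →ₗ[K] K) :
    rho u v (linF ξ) = Polynomial.C (ξ u) + Polynomial.C (ξ v) * Polynomial.X :=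
  Polynomial.funext fun τ => by rw [rho_eval, linF_eval]; simp; ring

theorem exists_xy [Infinite K] (u v : Fin (m+1) → K) (h : LinearIndependent K ![u, v]) :
    ∃ x y : PR K m, x.IsHomogeneous 1 ∧ y.IsHomogeneous 1 ∧ rho u v x = Polynomial.X ∧
      rho u v y = 1 := by
  have hu : u ∉ Submodule.span K {v} := by
    intro hu
    obtain ⟨c, hc⟩ := Submodule.mem_span_singleton.1 hu
    have := LinearIndependent.pair_iff.1 h 1 (-c) (by rw [← hc]; simp)
    simp at this
  have hv : v ∉ Submodule.span K {u} := by
    intro hu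
    obtain ⟨c, hc⟩ := Submodule.mem_span_singleton.1 hu
    have := LinearIndependent.pair_iff.1 h (-c) 1 (by rw [← hc]; simp)
    simp at this
  obtain ⟨f, hf, hfv⟩ := Submodule.exists_le_ker_of_notMem hu
  obtain ⟨g, hg, hgu⟩ := Submodule.exists_le_ker_of_notMem hv
  have e1 : f v = 0 := hfv (Submodule.mem_span_singleton_self v)
  have e2 : g u = 0 := hgu (Submodule.mem_span_singleton_self u)
  refine ⟨linF ((g v)⁻¹ • g), linF ((f u)⁻¹ • f), linF_homog _, linF_homog _, ?_, ?_⟩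
  · rw [rho_linF]; simp [e2, hg]
  · rw [rho_linF]; simp [e1, hf]

theorem homg_homog {x y : PR K m} (hx : x.IsHomogeneous 1) (hy : y.IsHomogeneous 1) (M : ℕ)
    (q : Polynomial K) : (homg x y M q).IsHomogeneous M := by
  refine IsHomogeneous.sum _ _ _ fun i hi => IsHomogeneous.C_mul ?_ _
  have := (hx.pow i).mul (hy.pow (M - i))
  rw [Finset.mem_range] at hi
  convert this using 1
  omega

theorem rho_homg {u v : Fin (m+1) → K} {x y : PR K m} (rx : rho u v x = Polynomial.X)
    (ry : rho u v y = 1) (M : ℕ) (q : Polynomial K) (hq : q.natDegree ≤ M) :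
    rho u v (homg x y M q) = q := by
  conv_rhs => rw [q.as_sum_range' (M+1) (by omega)]
  rw [homg, map_sum]
  refine Finset.sum_congr rfl fun i _ => ?_
  rw [map_mul, map_mul, map_pow, map_pow, rx, ry, one_pow, mul_one,
    ← Polynomial.C_mul_X_pow_eq_monomial]
  congr 1
  simp [rho]

/-! homogeneous ideals -/

theorem homogComp_X_mul (i : Fin (m+1)) (f : PR K m) (n : ℕ) :
    homogeneousComponent (n+1) (X i * f) = X i * homogeneousComponent n f := by
  ext e
  rw [coeff_homogeneousComponent, coeff_X_mul', coeff_X_mul']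
  by_cases h : i ∈ e.support
  · rw [if_pos h, if_pos h, coeff_homogeneousComponent]
    have h1 : (e - Finsupp.single i 1).degree + 1 = e.degree := by
      have : e - Finsupp.single i 1 + Finsupp.single i 1 = e := by
        apply tsub_add_cancel_of_le
        rw [Finsupp.single_le_iff]
        have := Finsupp.mem_support_iff.1 h
        omega
      conv_rhs => rw [← this]
      simp
    by_cases h2 : e.degree = n + 1
    · rw [if_pos h2, if_pos (by omega)]
    · rw [if_neg h2, if_neg (by omega)]
  · simp [h]

/-- ideal spanned by the homogeneous elements of an ideal -/
noncomputable def hspan (P : Ideal (PR K m)) : Ideal (PR K m) :=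
  Ideal.span {f : PR K m | (∃ n, f.IsHomogeneous n) ∧ f ∈ P}

theorem hspan_le (P : Ideal (PR K m)) : hspan P ≤ P := Ideal.span_le.2 fun _ hf => hf.2

theorem mem_hspan {P : Ideal (PR K m)} {f : PR K m} {n : ℕ} (hf : f.IsHomogeneous n)
    (h : f ∈ P) : f ∈ hspan P := Ideal.subset_span ⟨⟨n, hf⟩, h⟩

attribute [local instance] MvPolynomial.gradedAlgebra

theorem homogI_of (I : Ideal (PR K m)) (h : I.IsHomogeneous (homogeneousSubmodule (Fin (m+1)) K)) :
    IsHomogI I := by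
  intro f hf n
  have := h n hf
  rwa [show ((DirectSum.decompose (homogeneousSubmodule (Fin (m+1)) K) f n : PR K m)) =
    homogeneousComponent n f from decomposition.decompose'_apply f n] at this

theorem hspan_homog (P : Ideal (PR K m)) : IsHomogI (hspan P) := by
  apply homogI_of
  apply Ideal.homogeneous_span
  rintro f ⟨⟨n, hn⟩, -⟩
  exact ⟨n, hn⟩

theorem mem_of_components {I : Ideal (PR K m)} {f : PR K m}
    (h : ∀ n, homogeneousComponent n f ∈ I) : f ∈ I := by
  rw [← sum_homogeneousComponent f]
  exact Ideal.sum_mem _ fun n _ => h n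

theorem hspan_sat (P : Ideal (PR K m)) (hP : ∀ f, (∀ i, X i * f ∈ P) → f ∈ P) :
    IsSatI (hspan P) := by
  intro f hf
  refine mem_of_components fun n => mem_hspan (homogeneousComponent_isHomogeneous n f) ?_
  refine hP _ fun i => ?_
  rw [← homogComp_X_mul]
  exact hspan_le P (hspan_homog P _ (hf i) (n+1))

/-- vanishing ideal of a set -/
noncomputable def vanI (S : Set (Pm K m)) : Ideal (PR K m) :=
  ⨅ a ∈ S, RingHom.ker (eval (Projectivization.rep a))

theorem mem_vanI (S : Set (Pm K m)) (f : PR K m) :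
    f ∈ vanI S ↔ ∀ a ∈ S, eval (Projectivization.rep a) f = 0 := by
  simp [vanI, RingHom.mem_ker]

theorem idealOfSet_eq (S : Set (Pm K m)) : idealOfSet S = hspan (vanI S) := by
  simp only [idealOfSet, hspan, mem_vanI]

theorem idealOfSet_homog (S : Set (Pm K m)) : IsHomogI (idealOfSet S) := by
  rw [idealOfSet_eq]; exact hspan_homog _

theorem idealOfSet_sat (S : Set (Pm K m)) : IsSatI (idealOfSet S) := by
  rw [idealOfSet_eq]
  apply hspan_sat
  intro f hf
  rw [mem_vanI]
  intro a ha
  by_contra hne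
  apply a.rep_nonzero
  ext i
  have := (mem_vanI _ _).1 (hf i) a ha
  rw [map_mul, eval_X] at this
  simpa [hne] using this

theorem mem_idealOfSet {S : Set (Pm K m)} {f : PR K m} {n : ℕ} (hf : f.IsHomogeneous n) :
    f ∈ idealOfSet S ↔ ∀ a ∈ S, eval (Projectivization.rep a) f = 0 := by
  rw [← mem_vanI, idealOfSet_eq]
  exact ⟨fun h => hspan_le _ h, fun h => mem_hspan hf h⟩

end part2

section part3
open MvPolynomial
variable {K : Type} [Field K] {m : ℕ}

theorem sat_y {I : Ideal (PR K m)} (hs : IsSatI I) {u v : Fin (m+1) → K} {x y : PR K m}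
    (hz : ∀ i, X i - C (u i) * y - C (v i) * x ∈ I) {N : ℕ} (hN : x ^ N ∈ I) (k : ℕ) :
    ∀ f, y ^ k * f ∈ I → f ∈ I := by
  have key : ∀ N : ℕ, ∀ g, y * g ∈ I → x ^ N * g ∈ I → g ∈ I := by
    intro N
    induction N with
    | zero => intro g _ h; simpa using h
    | succ N ih =>
      intro g hy hx
      have hxg : x * g ∈ I := by
        apply ih
        · have := I.mul_mem_left x hy
          convert this using 1; ring
        · convert hx using 1; ring
      apply hs
      intro i
      have h1 := I.mul_mem_right g (hz i)
      have h2 := I.mul_mem_left (C (u i)) hy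
      have h3 := I.mul_mem_left (C (v i)) hxg
      convert I.add_mem (I.add_mem h1 h2) h3 using 1
      ring
  induction k with
  | zero => intro f h; simpa using h
  | succ k ih =>
    intro f h
    apply key N f
    · apply ih
      convert h using 1; ring
    · exact I.mul_mem_right f hN

/-- homogeneous membership through restriction -/
theorem mem_of_rho [Infinite K] {I : Ideal (PR K m)} (hh : IsHomogI I) (hs : IsSatI I)
    {u v : Fin (m+1) → K} {x y : PR K m} (hy : y.IsHomogeneous 1)
    (rx : rho u v x = Polynomial.X) (ry : rho u v y = 1)
    (hL : ∀ f n, f.IsHomogeneous n → rho u v f = 0 → f ∈ I)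
    (hz : ∀ i, X i - C (u i) * y - C (v i) * x ∈ I) {N : ℕ} (hN : x ^ N ∈ I)
    {g : PR K m} {t : ℕ} (hg : g.IsHomogeneous t) (h : rho u v g ∈ I.map (rho u v)) : g ∈ I := by
  have hsurj : Function.Surjective (rho u v) := fun q => ⟨homg x y q.natDegree q,
    rho_homg rx ry _ _ le_rfl⟩
  obtain ⟨f, hf, hfg⟩ := (Ideal.mem_map_iff_of_surjective (rho u v) hsurj).1 h
  set T := f.totalDegree
  set f2 := ∑ n ∈ Finset.range (T+1), y ^ (t + T - n) * homogeneousComponent n f with hf2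
  have hf2I : f2 ∈ I := Ideal.sum_mem _ fun n _ => I.mul_mem_left _ (hh f hf n)
  have hf2h : f2.IsHomogeneous (t + T) := by
    refine IsHomogeneous.sum _ _ _ fun n hn => ?_
    have := (hy.pow (t + T - n)).mul (homogeneousComponent_isHomogeneous n f)
    rw [Finset.mem_range] at hn
    convert this using 1
    omega
  have hf2r : rho u v f2 = rho u v g := by
    rw [← hfg, hf2, map_sum]
    conv_rhs => rw [← sum_homogeneousComponent f, map_sum]
    refine Finset.sum_congr rfl fun n _ => ?_
    rw [map_mul, map_pow, ry, one_pow, one_mul]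
  have h1 : y ^ T * g - f2 ∈ I := by
    apply hL _ (t + T)
    · refine IsHomogeneous.sub ?_ hf2h
      have := (hy.pow T).mul hg
      rwa [show 1 * T + t = t + T by ring] at this
    · rw [map_sub, map_mul, map_pow, ry, hf2r]; simp
  apply sat_y hs hz hN T
  have := I.add_mem h1 hf2I
  simpa using this

theorem hilb_eq {I : Ideal (PR K m)} {u v : Fin (m+1) → K} {x y : PR K m}
    (hx : x.IsHomogeneous 1) (hy : y.IsHomogeneous 1)
    (rx : rho u v x = Polynomial.X) (ry : rho u v y = 1) (c : ℕ)
    (hI : ∀ f n, f.IsHomogeneous n → (f ∈ I ↔ Polynomial.X ^ c ∣ rho u v f)) (t : ℕ) (ht : c ≤ t) :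
    hilbQ I t = c := by
  let ψ : Hd K m t →ₗ[K] (Fin c → K) :=
    LinearMap.pi fun i => (Polynomial.lcoeff K i.1) ∘ₗ (rho u v).toLinearMap ∘ₗ (Hd K m t).subtype
  let θ : Hd K m t →ₗ[K] (PR K m ⧸ I) := (Ideal.Quotient.mkₐ K I).toLinearMap ∘ₗ (Hd K m t).subtype
  have hψ : Function.Surjective ψ := by
    intro w
    let q : Polynomial K := ∑ i : Fin c, Polynomial.monomial i.1 (w i)
    have hq : q.natDegree ≤ t := by
      refine Polynomial.natDegree_sum_le_of_forall_le _ _ fun i _ => ?_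
      exact (Polynomial.natDegree_monomial_le _).trans (by omega)
    refine ⟨⟨homg x y t q, homg_homog hx hy t q⟩, ?_⟩
    ext i
    change (rho u v (homg x y t q)).coeff i.1 = w i
    rw [rho_homg rx ry t q hq]
    simp only [q, Polynomial.finsetSum_coeff, Polynomial.coeff_monomial, Fin.val_inj]
    simp
  have hker : LinearMap.ker θ = LinearMap.ker ψ := by
    ext f
    rw [LinearMap.mem_ker, LinearMap.mem_ker]
    have h1 : θ f = 0 ↔ (f : PR K m) ∈ I := Ideal.Quotient.eq_zero_iff_mem
    rw [h1, hI _ _ f.2, Polynomial.X_pow_dvd_iff, funext_iff]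
    constructor
    · intro h i; exact h i.1 i.2
    · intro h i hi; exact h ⟨i, hi⟩
  have h1 : (Hd K m t).map (Ideal.Quotient.mkₐ K I).toLinearMap = LinearMap.range θ := by
    rw [LinearMap.range_comp, Submodule.range_subtype]
  rw [hilbQ, h1, ← (LinearMap.quotKerEquivRange θ).finrank_eq,
    (Submodule.quotEquivOfEq _ _ hker).finrank_eq,
    (LinearMap.quotKerEquivOfSurjective ψ hψ).finrank_eq]
  simp

theorem Z_struct [IsAlgClosed K] (Z : PSub K m) (L : Set (Pm K m))
    (W : Submodule K (Fin (m+1) → K)) (hW : Module.finrank K W = 2) (hLW : L = {a | a.submodule ≤ W})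
    (hZL : idealOfSet L ≤ Z.I) (a : Pm K m) (ha : pzeroLocus Z.I = {a}) (b : ℕ)
    (hdeg : idealDeg Z.I = b) :
    ∃ (v : Fin (m+1) → K) (x y : PR K m), (W = Submodule.span K {a.rep, v}) ∧
      LinearIndependent K ![a.rep, v] ∧
      x.IsHomogeneous 1 ∧ y.IsHomogeneous 1 ∧ rho a.rep v x = Polynomial.X ∧
      rho a.rep v y = 1 ∧
      ∀ f n, f.IsHomogeneous n → (f ∈ Z.I ↔ Polynomial.X ^ b ∣ rho a.rep v f) := by
  have : Infinite K := IsAlgClosed.instInfinite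
  have hmemL : ∀ p : Pm K m, p ∈ L ↔ p.rep ∈ W := by
    intro p
    rw [hLW, Set.mem_ofPred_eq, Projectivization.submodule_eq, Submodule.span_singleton_le_iff_mem]
  have haW : a.rep ∈ W := by
    by_contra hn
    obtain ⟨l, h1, h2, h3⟩ := exists_form_notMem W _ hn
    have hl : l ∈ Z.I := hZL ((mem_idealOfSet h1).2 fun p hp => h2 _ ((hmemL p).1 hp))
    have haz : a ∈ pzeroLocus Z.I := by rw [ha]; rfl
    have := haz l hl 1
    rw [homogeneousComponent_eq_self h1] at this
    exact h3 this
  obtain ⟨v, hvW, hspan⟩ : ∃ v, LinearIndependent K ![a.rep, v] ∧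
      W = Submodule.span K {a.rep, v} := by
    have hlt : Submodule.span K {a.rep} < W := by
      refine lt_of_le_of_ne ((Submodule.span_singleton_le_iff_mem _ _).2 haW) fun h => ?_
      rw [← h, finrank_span_singleton a.rep_nonzero] at hW
      omega
    obtain ⟨v, hv1, hv2⟩ := SetLike.exists_of_lt hlt
    have hli : LinearIndependent K ![a.rep, v] := by
      rw [LinearIndependent.pair_iff' a.rep_nonzero]
      intro c hc
      exact hv2 (Submodule.mem_span_singleton.2 ⟨c, hc⟩)
    refine ⟨v, hli, ?_⟩
    symm
    apply Submodule.eq_of_le_of_finrank_le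
    · rw [Submodule.span_le]
      rintro w (rfl | rfl)
      exacts [haW, hv1]
    · rw [hW]
      have := finrank_span_eq_card hli
      have h2 : Set.range ![a.rep, v] = {a.rep, v} := by
        ext w; simp [eq_comm]; exact or_comm
      rw [h2, Fintype.card_fin] at this
      exact this.ge
  obtain ⟨x, y, hx, hy, rx, ry⟩ := exists_xy a.rep v hvW
  have hL : ∀ f n, f.IsHomogeneous n → rho a.rep v f = 0 → f ∈ Z.I := by
    intro f n hf h0
    apply hZL
    rw [mem_idealOfSet hf]
    intro p hp
    rw [hmemL, hspan, Submodule.mem_span_pair] at hp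
    obtain ⟨α, β, h⟩ := hp
    rw [← h]
    exact rho_zero_vanish _ _ hf h0 α β
  have hC : ∀ c : K, rho a.rep v (C c) = Polynomial.C c := by intro c; simp [rho]
  have hz : ∀ i, X i - C (a.rep i) * y - C (v i) * x ∈ Z.I := by
    intro i
    apply hL _ 1
    · exact ((isHomogeneous_X _ _).sub (hy.C_mul _)).sub (hx.C_mul _)
    · rw [map_sub, map_sub, map_mul, map_mul, rx, ry, hC, hC]
      simp [rho]
  obtain ⟨N, hN⟩ : ∃ N, x ^ N ∈ Z.I := by
    change x ∈ Z.I.radical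
    rw [← vanishingIdeal_zeroLocus_eq_radical (K := K) Z.I, mem_vanishingIdeal_iff]
    intro w hw
    by_cases hw0 : w = 0
    · subst hw0
      have := eval_smul_homog hx 0 0
      simpa [coe_aeval_eq_eval] using this
    · have hwa : Projectivization.mk K w hw0 = a := by
        have : Projectivization.mk K w hw0 ∈ pzeroLocus Z.I := by
          intro f hf n
          obtain ⟨c, hc⟩ := Projectivization.exists_smul_eq_mk_rep K w hw0
          rw [← hc, Units.smul_def, eval_smul_homog (homogeneousComponent_isHomogeneous n f)]
          have h1 := hw _ (Z.homog f hf n)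
          have h2 : eval w (homogeneousComponent n f) = 0 := h1
          rw [h2, mul_zero]
        rw [ha] at this
        exact this
      obtain ⟨c, hc⟩ := Projectivization.exists_smul_eq_mk_rep K w hw0
      rw [hwa, Units.smul_def] at hc
      have h1 := eval_smul_homog hx c.1 w
      rw [hc, ← rho_coeff_zero a.rep v, rx, Polynomial.coeff_X_zero] at h1
      have h2 : eval w x = 0 := by
        have hc0 : (c : K) ≠ 0 := c.ne_zero
        simpa [hc0] using h1.symm
      exact h2
  have hsurj : Function.Surjective (rho a.rep v) := fun q => ⟨homg x y q.natDegree q,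
    rho_homg rx ry _ _ le_rfl⟩
  obtain ⟨c, hc⟩ : ∃ c : ℕ, Z.I.map (rho a.rep v) = Ideal.span {Polynomial.X ^ c} := by
    obtain ⟨g, hg⟩ := (IsPrincipalIdealRing.principal (Z.I.map (rho a.rep v))).principal
    have hXN : (Polynomial.X : Polynomial K) ^ N ∈ Z.I.map (rho a.rep v) := by
      have := Ideal.mem_map_of_mem (rho a.rep v) hN
      rwa [map_pow, rx] at this
    rw [hg] at hXN
    obtain ⟨c, -, hc⟩ := (dvd_prime_pow Polynomial.prime_X N).1 (Ideal.mem_span_singleton.1 hXN)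
    refine ⟨c, ?_⟩
    rw [hg]
    exact Ideal.span_singleton_eq_span_singleton.2 hc
  have hmem : ∀ f n, f.IsHomogeneous n → (f ∈ Z.I ↔ Polynomial.X ^ c ∣ rho a.rep v f) := by
    intro f n hf
    rw [← Ideal.mem_span_singleton, ← hc]
    exact ⟨fun h => Ideal.mem_map_of_mem _ h,
      fun h => mem_of_rho Z.homog Z.sat hy rx ry hL hz hN hf h⟩
  have hcb : c = b := by
    rw [← hdeg, idealDeg]
    symm
    apply Filter.Tendsto.limsup_eq
    apply tendsto_const_nhds.congr'
    filter_upwards [Filter.eventually_ge_atTop c] with t ht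
    exact (hilb_eq hx hy rx ry c hmem t ht).symm
  subst hcb
  exact ⟨v, x, y, hspan, hvW, hx, hy, rx, ry, hmem⟩

end part3

section part4
open MvPolynomial
variable {K : Type} [Field K] {m : ℕ}

theorem nu_apply (d : ℕ) (p : Fin (m+1) → K) (f : Hd K m d) : nu d p f = eval p (f : PR K m) := rfl

theorem nu_smul (d : ℕ) (c : K) (p : Fin (m+1) → K) : nu d (c • p) = c ^ d • nu d p := by
  ext f
  rw [nu_apply, eval_smul_homog f.2]; rfl

instance Hd_fd (d : ℕ) : FiniteDimensional K (Hd K m d) :=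
  Module.Finite.of_fg (homogeneousSubmodule_fg (σ := Fin (m+1)) (R := K) d)

theorem nu_ne_zero (d : ℕ) (a : Pm K m) : nu d a.rep ≠ 0 := by
  obtain ⟨l, h1, h2⟩ := exists_form_at a
  intro h
  have hl : (l ^ d).IsHomogeneous d := by simpa using h1.pow d
  have := LinearMap.congr_fun h ⟨l ^ d, hl⟩
  rw [nu_apply] at this
  simp only [map_pow, LinearMap.zero_apply] at this
  exact h2 (pow_eq_zero_iff_of_pos_or this)
where
  pow_eq_zero_iff_of_pos_or {x : K} {n : ℕ} (h : x ^ n = 0) : x = 0 := by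
    by_contra hx
    exact pow_ne_zero n hx h

theorem mem_dualSpan (d : ℕ) (S : Set (Pm K m)) (φ : Module.Dual K (Hd K m d)) :
    φ ∈ dualSpan d S ↔ ∀ f : Hd K m d, (∀ a ∈ S, eval (Projectivization.rep a) (f : PR K m) = 0) →
      φ f = 0 := by
  constructor
  · intro h f hf
    induction h using Submodule.span_induction with
    | mem x hx =>
      obtain ⟨a, ha, rfl⟩ := hx
      exact hf a ha
    | zero => rfl
    | add x y _ _ hx hy => rw [LinearMap.add_apply, hx, hy, add_zero]
    | smul c x _ hx => rw [LinearMap.smul_apply, hx, smul_zero]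
  · intro h
    have h1 := Subspace.dualCoannihilator_dualAnnihilator_eq (W := dualSpan d S)
    rw [← h1, Submodule.mem_dualAnnihilator]
    intro f hf
    apply h
    intro a ha
    rw [Submodule.mem_dualCoannihilator] at hf
    exact hf _ (Submodule.subset_span ⟨a, ha, rfl⟩)

theorem dualSpan_sum (d : ℕ) (A : Finset (Pm K m)) (φ : Module.Dual K (Hd K m d))
    (h : φ ∈ dualSpan d (↑A : Set (Pm K m))) :
    ∃ c : Pm K m → K, φ = ∑ p ∈ A, c p • nu d p.rep := by
  classical
  obtain ⟨c, hc⟩ := Submodule.mem_span_image_finset_iff_exists_fun K |>.1 h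
  refine ⟨fun p => if h : p ∈ A then c ⟨p, h⟩ else 0, ?_⟩
  rw [← hc, ← Finset.sum_coe_sort A]
  refine Finset.sum_congr rfl fun p _ => ?_
  simp

theorem sum_mem_dualSpan (d : ℕ) (A : Finset (Pm K m)) (S : Set (Pm K m)) (hA : ∀ p ∈ A, p ∈ S)
    (c : Pm K m → K) :
    ∑ p ∈ A, c p • nu d p.rep ∈ dualSpan d S :=
  Submodule.sum_mem _ fun p hp => Submodule.smul_mem _ _ (Submodule.subset_span ⟨p, hA p hp, rfl⟩)

theorem scheme_decomp (I : Ideal (PR K m)) (E : Finset (Pm K m)) (d : ℕ)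
    (φ : Module.Dual K (Hd K m d))
    (h : φ ∈ schemeSpanSub (I ⊓ idealOfSet (↑E : Set (Pm K m))) d) :
    ∃ φ₁ ∈ schemeSpanSub I d, ∃ c : Pm K m → K, φ = φ₁ + ∑ p ∈ E, c p • nu d p.rep := by
  let U : Submodule K (Hd K m d) := (I.restrictScalars K).comap (Hd K m d).subtype
  let V : Submodule K (Hd K m d) :=
    ((idealOfSet (↑E : Set (Pm K m))).restrictScalars K).comap (Hd K m d).subtype
  have h1 : φ ∈ (U ⊓ V).dualAnnihilator := by
    rw [Submodule.mem_dualAnnihilator]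
    intro f hf
    exact h f ⟨hf.1, hf.2⟩
  rw [Subspace.dualAnnihilator_inf_eq, Submodule.mem_sup] at h1
  obtain ⟨φ₁, hφ₁, φ₂, hφ₂, rfl⟩ := h1
  rw [Submodule.mem_dualAnnihilator] at hφ₁ hφ₂
  obtain ⟨c, hc⟩ := dualSpan_sum d E φ₂ ((mem_dualSpan d _ _).2 fun f hf =>
    hφ₂ f ((mem_idealOfSet f.2).2 hf))
  exact ⟨φ₁, fun f hf => hφ₁ f hf, c, by rw [hc]⟩

/-! ranks -/

theorem XSet_eq (d : ℕ) : XSet K m d = nuSet d Set.univ := by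
  ext Q; simp [XSet, nuSet]

theorem span_rep_eq {V : Type} [AddCommGroup V] [Module K V] (w : V) (hw : w ≠ 0) :
    Submodule.span K {(Projectivization.mk K w hw).rep} = Submodule.span K {w} := by
  rw [← Projectivization.submodule_eq, Projectivization.submodule_mk]

theorem exists_S_of_A (d : ℕ) (Y : Set (Pm K m)) (A : Finset (Pm K m)) (hA : ∀ p ∈ A, p ∈ Y) :
    ∃ S : Finset (PN K m d), (↑S : Set (PN K m d)) ⊆ nuSet d Y ∧ S.card ≤ A.card ∧
      dualSpan d (↑A : Set (Pm K m)) ≤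
        Submodule.span K (Projectivization.rep '' (S : Set (PN K m d))) := by
  classical
  let g : Pm K m → PN K m d := fun a => Projectivization.mk K (nu d a.rep) (nu_ne_zero d a)
  refine ⟨A.image g, ?_, Finset.card_image_le, ?_⟩
  · intro Q hQ
    rw [Finset.mem_coe, Finset.mem_image] at hQ
    obtain ⟨a, ha, haQ⟩ := hQ
    refine ⟨a, hA a ha, ?_⟩
    rw [← haQ]
    exact Projectivization.submodule_mk (nu d a.rep) (nu_ne_zero d a)
  · refine Submodule.span_le.2 ?_
    rintro _ ⟨a, ha, rfl⟩
    have h1 : nu d a.rep ∈ Submodule.span K {(Projectivization.mk K (nu d a.rep)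
        (nu_ne_zero d a)).rep} := by
      rw [span_rep_eq]; exact Submodule.mem_span_singleton_self _
    refine Submodule.span_mono ?_ h1
    rw [Set.singleton_subset_iff]
    exact ⟨_, Finset.mem_coe.2 (Finset.mem_image_of_mem _ ha), rfl⟩

theorem exists_A_of_S (d : ℕ) (Y : Set (Pm K m)) (S : Finset (PN K m d))
    (hS : (↑S : Set (PN K m d)) ⊆ nuSet d Y) :
    ∃ A : Finset (Pm K m), (∀ p ∈ A, p ∈ Y) ∧ A.card ≤ S.card ∧
      Submodule.span K (Projectivization.rep '' (S : Set (PN K m d))) ≤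
        dualSpan d (↑A : Set (Pm K m)) := by
  classical
  choose! g hg1 hg2 using hS
  refine ⟨S.image g, ?_, Finset.card_image_le, ?_⟩
  · intro p hp
    obtain ⟨Q, hQ, rfl⟩ := Finset.mem_image.1 hp
    exact hg1 hQ
  · refine Submodule.span_le.2 ?_
    rintro _ ⟨Q, hQ, rfl⟩
    have h1 : Q.rep ∈ Q.submodule := by
      rw [Projectivization.submodule_eq]; exact Submodule.mem_span_singleton_self _
    rw [hg2 hQ] at h1
    refine Submodule.span_mono ?_ h1
    rw [Set.singleton_subset_iff]
    exact ⟨_, Finset.mem_coe.2 (Finset.mem_image_of_mem _ hQ), rfl⟩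

theorem rankW_le (d : ℕ) (Y : Set (Pm K m)) (A : Finset (Pm K m)) (hA : ∀ p ∈ A, p ∈ Y)
    (P : PN K m d) (h : P.rep ∈ dualSpan d (↑A : Set (Pm K m))) :
    rankWrt (nuSet d Y) P ≤ A.card := by
  obtain ⟨S, h1, h2, h3⟩ := exists_S_of_A d Y A hA
  refine le_trans (Nat.sInf_le ?_) h2
  exact ⟨S, h1, rfl, h3 h⟩

theorem rankW_ge (d : ℕ) (Y : Set (Pm K m)) (P : PN K m d) (n : ℕ)
    (A : Finset (Pm K m)) (hA : ∀ p ∈ A, p ∈ Y) (h : P.rep ∈ dualSpan d (↑A : Set (Pm K m)))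
    (hn : ∀ A : Finset (Pm K m), (∀ p ∈ A, p ∈ Y) → P.rep ∈ dualSpan d (↑A : Set (Pm K m)) →
      n ≤ A.card) : n ≤ rankWrt (nuSet d Y) P := by
  obtain ⟨S, h1, h2, h3⟩ := exists_S_of_A d Y A hA
  unfold rankWrt
  refine le_csInf ⟨S.card, S, h1, rfl, h3 h⟩ ?_
  rintro r ⟨S, hS, rfl, hP⟩
  obtain ⟨A, hA, hc, hle⟩ := exists_A_of_S d Y S hS
  exact (hn A hA (hle hP)).trans hc

end part4

section part5
open MvPolynomial

/-- functional on polynomials depending only on the first `b` coefficients -/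
noncomputable def lc {K : Type} [Field K] (b : ℕ) (c : ℕ → K) : Polynomial K →ₗ[K] K :=
  ∑ i ∈ Finset.range b, c i • Polynomial.lcoeff K i

/-- all the data -/
structure Ctx (K : Type) [Field K] (m b : ℕ) where
  a : Pm K m
  v : Fin (m+1) → K
  x : PR K m
  y : PR K m
  W : Submodule K (Fin (m+1) → K)
  E : Finset (Pm K m)
  c : ℕ → K
  e : Pm K m → K
  hW : W = Submodule.span K {a.rep, v}
  hWr : Module.finrank K W = 2
  hx : x.IsHomogeneous 1
  hy : y.IsHomogeneous 1
  rx : rho a.rep v x = Polynomial.X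
  ry : rho a.rep v y = 1
  hE : ∀ p ∈ E, p.rep ∉ W
  hc : c (b-1) ≠ 0
  he : ∀ p ∈ E, e p ≠ 0
  hb : 2 ≤ b

variable {K : Type} [Field K] {m b : ℕ}

theorem lc_apply (b : ℕ) (c : ℕ → K) (q : Polynomial K) :
    lc b c q = ∑ i ∈ Finset.range b, c i * q.coeff i := by
  simp [lc]

theorem lc_X_pow (b : ℕ) (c : ℕ → K) (q : Polynomial K) (hb : 1 ≤ b) :
    lc b c (Polynomial.X ^ (b-1) * q) = c (b-1) * q.coeff 0 := by
  rw [lc_apply, Finset.sum_eq_single_of_mem (b-1) (Finset.mem_range.2 (by omega))]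
  · rw [Polynomial.coeff_X_pow_mul', if_pos le_rfl, Nat.sub_self]
  · intro i hi hne
    rw [Finset.mem_range] at hi
    rw [Polynomial.coeff_X_pow_mul', if_neg (by omega), mul_zero]

theorem lc_X_pow_zero (b : ℕ) (c : ℕ → K) (q : Polynomial K) (n : ℕ) (hn : b ≤ n) :
    lc b c (Polynomial.X ^ n * q) = 0 := by
  rw [lc_apply]
  refine Finset.sum_eq_zero fun i hi => ?_
  rw [Finset.mem_range] at hi
  rw [Polynomial.coeff_X_pow_mul', if_neg (by omega), mul_zero]

namespace Ctx
variable (X : Ctx K m b)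

/-- the functional along the line -/
noncomputable def Phi (f : PR K m) : K := lc b X.c (rho X.a.rep X.v f)

theorem memW (τ : K) : X.a.rep + τ • X.v ∈ X.W := by
  rw [X.hW]
  exact Submodule.mem_span_pair.2 ⟨1, τ, by simp⟩

theorem rho_zero [Infinite K] {f : PR K m} (h : ∀ p ∈ X.W, eval p f = 0) :
    rho X.a.rep X.v f = 0 := rho_zero_of_vanish _ _ fun τ => h _ (X.memW τ)

theorem haW : X.a.rep ∈ X.W := by simpa using X.memW 0

theorem phi_zero [Infinite K] {f : PR K m} (h : ∀ p ∈ X.W, eval p f = 0) : X.Phi f = 0 := by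
  rw [Phi, X.rho_zero h, map_zero]

theorem x_a : eval X.a.rep X.x = 0 := by
  rw [← rho_coeff_zero X.a.rep X.v, X.rx, Polynomial.coeff_X_zero]

open scoped Classical in
theorem main_rel [Infinite K] (d : ℕ) (hd : 2 * b + 2 ≤ d) (B : Finset (Pm K m)) (γ : Pm K m → K)
    (hγ : ∀ p ∈ B, γ p ≠ 0)
    (hrel : ∀ f : PR K m, f.IsHomogeneous d → X.Phi f = ∑ p ∈ B, γ p * eval p.rep f)
    (hB : B.card + 3 * b + 1 ≤ 2 * d) : (∀ p ∈ B, p.rep ∈ X.W) ∧ d + 2 ≤ B.card + b := by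
  have hb := X.hb
  have hsum0 : ∀ f : PR K m, f.IsHomogeneous d → (∀ p ∈ B, eval p.rep f = 0) → X.Phi f = 0 := by
    intro f hf h
    rw [hrel f hf]
    exact Finset.sum_eq_zero fun p hp => by rw [h p hp, mul_zero]
  obtain ⟨d', rfl⟩ : ∃ d', d = d' + 1 := ⟨d - 1, by omega⟩
  have hall : ∀ p ∈ B, p.rep ∈ X.W := by
    by_contra hnot
    push Not at hnot
    obtain ⟨p0, hp0, hp0W⟩ := hnot
    obtain ⟨c1, hc1, hr1⟩ := resid_rel d' B γ hγ X.W (fun f hf h => by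
      rw [← hrel f hf, X.phi_zero h])
    set B' := B.filter (fun p => p.rep ∉ X.W) with hB'
    have hp0B' : p0 ∈ B' := Finset.mem_filter.2 ⟨hp0, hp0W⟩
    have hsub : B' ⊆ B := Finset.filter_subset _ _
    have hcard := Finset.card_le_card hsub
    obtain ⟨D, hD, hDB⟩ := line_lemma d' B' c1 hc1 hr1 (by omega)
    have hfew := few_points d' B' c1 hc1 hr1 ⟨p0, hp0B'⟩
    have hWD : ¬ X.W ≤ D := by
      intro h
      have := Submodule.eq_of_le_of_finrank_le h (by rw [X.hWr]; exact hD)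
      exact hp0W (this ▸ hDB p0 hp0B')
    obtain ⟨w, hwW, hwD⟩ := SetLike.not_le_iff_exists.1 hWD
    obtain ⟨l, l1, l2, l3⟩ := exists_form_notMem D w hwD
    set B3 := (B \ B').erase X.a with hB3
    have hB3c : B3.card + B'.card ≤ B.card := by
      have h1 : B3.card ≤ (B \ B').card := Finset.card_le_card (Finset.erase_subset _ _)
      have h2 := Finset.card_sdiff_add_card_eq_card hsub
      omega
    have hvan : ∀ h g : PR K m, (∀ p ∈ B3, eval p.rep g = 0) →
        eval X.a.rep (l * h * g) = 0 → ∀ p ∈ B, eval p.rep (l * h * g) = 0 := by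
      intro h g hg ha p hp
      by_cases hpa : p = X.a
      · rw [hpa, ha]
      by_cases hpB' : p ∈ B'
      · simp [l2 _ (hDB p hpB')]
      · simp [hg p (Finset.mem_erase.2 ⟨hpa, Finset.mem_sdiff.2 ⟨hp, hpB'⟩⟩)]
    by_cases hl0 : eval X.a.rep l = 0
    · obtain ⟨q, hq⟩ : Polynomial.X ∣ rho X.a.rep X.v l := by
        rw [Polynomial.X_dvd_iff, rho_coeff_zero, hl0]
      have hq0 : q.coeff 0 ≠ 0 := by
        intro h0
        have hdeg := rho_natDegree X.a.rep X.v l1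
        have hzero : rho X.a.rep X.v l = 0 := by
          ext i
          rcases i with _ | _ | i
          · rw [rho_coeff_zero, hl0]; simp
          · rw [hq, Polynomial.coeff_X_mul, h0]; simp
          · rw [Polynomial.coeff_eq_zero_of_natDegree_lt (by omega)]; simp
        rw [X.hW, Submodule.mem_span_pair] at hwW
        obtain ⟨α, β, h⟩ := hwW
        exact l3 (h ▸ rho_zero_vanish _ _ l1 hzero α β)
      obtain ⟨g, g1, g2, g3⟩ := exists_sep B3 X.a (by simp [hB3]) (d' + 1 - (b - 1)) (by omega)
      have h1 := hsum0 (l * X.x ^ (b-2) * g) (by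
        have := (l1.mul (X.hx.pow (b-2))).mul g1
        convert this using 1
        omega) (hvan _ _ g2 (by simp [hl0]))
      have h2 : rho X.a.rep X.v (l * X.x ^ (b-2) * g) =
          Polynomial.X ^ (b-1) * (q * rho X.a.rep X.v g) := by
        rw [map_mul, map_mul, map_pow, X.rx, hq, show b - 1 = (b - 2) + 1 by omega]
        ring
      rw [Phi, h2, lc_X_pow _ _ _ (by omega), Polynomial.mul_coeff_zero, rho_coeff_zero] at h1
      exact mul_ne_zero X.hc (mul_ne_zero hq0 g3) h1
    · obtain ⟨g, g1, g2, g3⟩ := exists_sep B3 X.a (by simp [hB3]) (d' + 1 - b) (by omega)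
      have h1 := hsum0 (l * X.x ^ (b-1) * g) (by
        have := (l1.mul (X.hx.pow (b-1))).mul g1
        convert this using 1
        omega) (hvan _ _ g2 (by
          have : b - 1 ≠ 0 := by omega
          simp [X.x_a, this]))
      have h2 : rho X.a.rep X.v (l * X.x ^ (b-1) * g) =
          Polynomial.X ^ (b-1) * (rho X.a.rep X.v l * rho X.a.rep X.v g) := by
        rw [map_mul, map_mul, map_pow, X.rx]
        ring
      rw [Phi, h2, lc_X_pow _ _ _ (by omega), Polynomial.mul_coeff_zero, rho_coeff_zero,
        rho_coeff_zero] at h1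
      exact mul_ne_zero X.hc (mul_ne_zero hl0 g3) h1
  refine ⟨hall, ?_⟩
  by_contra hlt
  have hcard := Finset.card_erase_le (s := B) (a := X.a)
  obtain ⟨g, g1, g2, g3⟩ := exists_sep (B.erase X.a) X.a (by simp) (d' + 1 - (b-1)) (by omega)
  have h1 := hsum0 (X.x ^ (b-1) * g) (by
    have := (X.hx.pow (b-1)).mul g1
    convert this using 1
    omega) (by
      intro p hp
      by_cases hpa : p = X.a
      · have : b - 1 ≠ 0 := by omega
        simp [hpa, X.x_a, this]
      · simp [g2 p (Finset.mem_erase.2 ⟨hpa, hp⟩)])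
  rw [Phi, map_mul, map_pow, X.rx, lc_X_pow _ _ _ (by omega), rho_coeff_zero] at h1
  exact mul_ne_zero X.hc g3 h1

open scoped Classical in
theorem sr_lower [Infinite K] (d : ℕ) (hd : 2 * (X.E.card + b) + 2 ≤ d) (A : Finset (Pm K m))
    (α : Pm K m → K)
    (hrel : ∀ f : PR K m, f.IsHomogeneous d →
      X.Phi f + ∑ p ∈ X.E, X.e p * eval p.rep f = ∑ p ∈ A, α p * eval p.rep f) :
    d + 2 + X.E.card ≤ A.card + b := by
  have hb := X.hb
  by_contra hlt
  let γ : Pm K m → K := fun p => (if p ∈ A then α p else 0) - (if p ∈ X.E then X.e p else 0)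
  let B := (A ∪ X.E).filter (fun p => γ p ≠ 0)
  have hBc : B.card ≤ A.card + X.E.card :=
    (Finset.card_filter_le _ _).trans (Finset.card_union_le _ _)
  obtain ⟨h1, h2⟩ := X.main_rel d (by omega) B γ (fun p hp => (Finset.mem_filter.1 hp).2) (by
    intro f hf
    have h := hrel f hf
    have e1 : ∑ p ∈ B, γ p * eval p.rep f = ∑ p ∈ A ∪ X.E, γ p * eval p.rep f := by
      apply Finset.sum_subset (Finset.filter_subset _ _)
      intro p hp hpB
      have : γ p = 0 := by
        by_contra hne
        exact hpB (Finset.mem_filter.2 ⟨hp, hne⟩)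
      rw [this, zero_mul]
    have e2 : ∑ p ∈ A ∪ X.E, (if p ∈ A then α p else 0) * eval p.rep f =
        ∑ p ∈ A, α p * eval p.rep f := by
      rw [← Finset.sum_subset (Finset.subset_union_left (s₂ := X.E))]
      · exact Finset.sum_congr rfl fun p hp => by rw [if_pos hp]
      · intro p _ hp; rw [if_neg hp, zero_mul]
    have e3 : ∑ p ∈ A ∪ X.E, (if p ∈ X.E then X.e p else 0) * eval p.rep f =
        ∑ p ∈ X.E, X.e p * eval p.rep f := by
      rw [← Finset.sum_subset (Finset.subset_union_right (s₁ := A))]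
      · exact Finset.sum_congr rfl fun p hp => by rw [if_pos hp]
      · intro p _ hp; rw [if_neg hp, zero_mul]
    rw [e1]
    simp only [γ, sub_mul, Finset.sum_sub_distrib]
    rw [e2, e3, ← h]; ring) (by omega)
  have hEB : ∀ p ∈ X.E, p ∉ B := fun p hp hpB => X.hE p hp (h1 p hpB)
  have hEA : X.E ⊆ A := by
    intro p hp
    by_contra hpA
    apply hEB p hp
    refine Finset.mem_filter.2 ⟨Finset.mem_union_right _ hp, ?_⟩
    simp [γ, hpA, hp, X.he p hp]
  have hBA : B ⊆ A \ X.E := by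
    intro p hp
    have hpE : p ∉ X.E := fun h => hEB p h hp
    refine Finset.mem_sdiff.2 ⟨?_, hpE⟩
    rcases Finset.mem_union.1 (Finset.mem_filter.1 hp).1 with h | h
    · exact h
    · exact absurd h hpE
  have h3 := Finset.card_le_card hBA
  have h4 := Finset.card_sdiff_add_card_eq_card hEA
  omega

end Ctx
end part5

section part6
open Polynomial
variable {K : Type} [Field K]

theorem lc_eq_coeff (b : ℕ) (hb : 1 ≤ b) (c : ℕ → K) (q : K[X]) :
    lc b c q = PowerSeries.coeff (b-1)
      (PowerSeries.mk (fun r => c (b-1-r)) * (q : PowerSeries K)) := by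
  rw [lc_apply, mul_comm, PowerSeries.coeff_mul, Finset.Nat.sum_antidiagonal_eq_sum_range_succ_mk,
    show (b-1).succ = b by omega]
  refine Finset.sum_congr rfl fun i hi => ?_
  rw [Finset.mem_range] at hi
  rw [PowerSeries.coeff_mk, Polynomial.coeff_coe, show b - 1 - (b - 1 - i) = i by omega, mul_comm]

theorem exists_P (b : ℕ) (hb : 2 ≤ b) (c : ℕ → K) (hc : c (b-1) ≠ 0) :
    ∃ P : K[X], P.natDegree ≤ b - 1 ∧ P.coeff 0 ≠ 0 ∧
      ∀ q : K[X], q.natDegree ≤ b - 2 → lc b c (P * q) = 0 := by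
  set S : PowerSeries K := PowerSeries.mk (fun r => c (b-1-r)) with hS
  have hS0 : PowerSeries.constantCoeff S ≠ 0 := by
    rw [← PowerSeries.coeff_zero_eq_constantCoeff_apply, hS, PowerSeries.coeff_mk]
    simpa using hc
  have hST : S * S⁻¹ = 1 := PowerSeries.mul_inv_cancel S hS0
  refine ⟨PowerSeries.trunc b S⁻¹, ?_, ?_, ?_⟩
  · have := PowerSeries.natDegree_trunc_lt S⁻¹ (b-1)
    rw [show b - 1 + 1 = b by omega] at this
    omega
  · rw [PowerSeries.coeff_trunc, if_pos (by omega), PowerSeries.coeff_zero_eq_constantCoeff_apply,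
      PowerSeries.constantCoeff_inv]
    exact inv_ne_zero hS0
  · intro q hq
    rw [lc_eq_coeff b (by omega), ← hS]
    have h1 : (PowerSeries.X : PowerSeries K) ^ b ∣
        S⁻¹ - (PowerSeries.trunc b S⁻¹ : K[X]) := by
      rw [PowerSeries.X_pow_dvd_iff]
      intro i hi
      rw [map_sub, Polynomial.coeff_coe, PowerSeries.coeff_trunc, if_pos hi, sub_self]
    obtain ⟨U, hU⟩ := h1
    have h2 : S * ((PowerSeries.trunc b S⁻¹ * q : K[X]) : PowerSeries K) =
        (q : PowerSeries K) - PowerSeries.X ^ b * (S * U * (q : PowerSeries K)) := by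
      rw [Polynomial.coe_mul, ← mul_assoc,
        show ((PowerSeries.trunc b S⁻¹ : K[X]) : PowerSeries K) = S⁻¹ - PowerSeries.X ^ b * U by
          rw [← hU]; ring, mul_sub, hST]
      ring
    rw [h2, map_sub, Polynomial.coeff_coe, PowerSeries.coeff_X_pow_mul', if_neg (by omega),
      Polynomial.coeff_eq_zero_of_natDegree_lt (by omega), sub_zero]

theorem dvd_of_roots [IsAlgClosed K] (G q : K[X]) (hG : G ≠ 0) (hn : G.roots.Nodup)
    (h : ∀ t, G.eval t = 0 → q.eval t = 0) : G ∣ q := by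
  by_cases hq : q = 0
  · rw [hq]; exact dvd_zero _
  have h1 := (IsAlgClosed.splits G).eq_prod_roots
  have h2 : (G.roots.map (fun a => X - C a)).prod ∣ q := by
    rw [Multiset.prod_X_sub_C_dvd_iff_le_roots hq, Multiset.le_iff_subset hn]
    intro t ht
    rw [mem_roots hq]
    exact h t ((mem_roots hG).1 ht)
  rw [h1]
  exact (IsUnit.mul_left_dvd (isUnit_C.2 (isUnit_iff_ne_zero.2 (leadingCoeff_ne_zero.2 hG)))).2 h2

theorem sylvester [IsAlgClosed K] [CharZero K] (b d : ℕ) (hb : 2 ≤ b) (hd : 2 * b + 2 ≤ d)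
    (c : ℕ → K) (hc : c (b-1) ≠ 0) :
    ∃ R : Finset K, R.card ≤ d + 2 - b ∧ ∀ q : K[X], q.natDegree ≤ d →
      (∀ t ∈ R, q.eval t = 0) → lc b c q = 0 := by
  classical
  obtain ⟨P, hP1, hP2, hP3⟩ := exists_P b hb c hc
  set n := d + 2 - b with hn
  have hP0 : P ≠ 0 := by rintro rfl; simp at hP2
  set D : K[X] := X * derivative P - C (n : K) * P with hD
  have hD0 : D ≠ 0 := by
    intro h
    have : D.coeff 0 = 0 := by rw [h]; simp
    rw [hD, coeff_sub, mul_coeff_zero, coeff_X_zero, coeff_C_mul, zero_mul, zero_sub, neg_eq_zero,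
      mul_eq_zero] at this
    rcases this with h | h
    · have : n ≠ 0 := by omega
      exact this (by exact_mod_cast h)
    · exact hP2 h
  haveI : Infinite K := IsAlgClosed.instInfinite
  obtain ⟨α, hα⟩ := Infinite.exists_notMem_finset
    (insert 0 (D.roots.toFinset.image (fun t => - P.eval t / t ^ n)))
  rw [Finset.mem_insert, not_or] at hα
  obtain ⟨hα0, hα1⟩ := hα
  set G : K[X] := P + C α * X ^ n with hGdef
  have hGc : G.coeff n = α := by
    rw [hGdef, coeff_add, coeff_eq_zero_of_natDegree_lt (by omega)]
    simp
  have hG0 : G ≠ 0 := by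
    intro h; rw [h] at hGc; exact hα0 (by simpa using hGc.symm)
  have hGd : G.natDegree ≤ n := by
    refine natDegree_add_le_of_degree_le (by omega) (natDegree_C_mul_X_pow_le _ _)
  have hGd' : G.natDegree = n := le_antisymm hGd (le_natDegree_of_ne_zero (by rw [hGc]; exact hα0))
  have hnod : G.roots.Nodup := by
    rw [Multiset.nodup_iff_count_le_one]
    intro t
    rw [count_roots]
    by_contra hlt
    push Not at hlt
    rw [one_lt_rootMultiplicity_iff_isRoot hG0] at hlt
    obtain ⟨h1, h2⟩ := hlt
    rw [IsRoot.def] at h1 h2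
    simp only [hGdef, eval_add, eval_mul, eval_C, eval_pow, eval_X, derivative_add, derivative_mul,
      derivative_C, zero_mul, zero_add, derivative_X_pow, eval_natCast] at h1 h2
    have ht : t ≠ 0 := by
      rintro rfl
      rw [zero_pow (by omega), mul_zero, add_zero, ← coeff_zero_eq_eval_zero] at h1
      exact hP2 h1
    apply hα1
    rw [Finset.mem_image]
    refine ⟨t, ?_, ?_⟩
    · rw [Multiset.mem_toFinset, mem_roots hD0, IsRoot.def, hD]
      simp only [eval_sub, eval_mul, eval_X, eval_C]
      have h3 : t ^ n = t * t ^ (n-1) := by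
        rw [← pow_succ', show n - 1 + 1 = n by omega]
      rw [h3] at h1
      linear_combination t * h2 - (n : K) * h1
    · rw [div_eq_iff (pow_ne_zero _ ht)]
      linear_combination -h1
  refine ⟨G.roots.toFinset, ?_, ?_⟩
  · exact (Multiset.toFinset_card_le _).trans ((card_roots' G).trans hGd)
  · intro q hq h
    obtain ⟨q', rfl⟩ := dvd_of_roots G q hG0 hnod fun t ht =>
      h t (by rw [Multiset.mem_toFinset, mem_roots hG0]; exact ht)
    by_cases hq' : q' = 0
    · simp [hq']
    rw [natDegree_mul hG0 hq', hGd'] at hq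
    have h1 : G * q' = P * q' + α • (X ^ n * q') := by
      rw [hGdef, smul_eq_C_mul]; ring
    rw [h1, map_add, map_smul, hP3 q' (by omega), lc_X_pow_zero _ _ _ _ (by omega)]
    simp

end part6

section part7
open Polynomial
variable {K : Type} [Field K] {m b : ℕ}

theorem zClosure_of_curve [Infinite K] {V : Type} [AddCommGroup V] [Module K V] (T : Set (ℙ K V))
    (P : ℙ K V) (γ : K → V) (h0 : γ 0 = P.rep)
    (hpoly : ∀ φ : V →ₗ[K] K, ∃ q : K[X], ∀ ε, φ (γ ε) = q.eval ε)
    (hne : T.Nonempty)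
    (hT : ∀ ε, ε ≠ 0 → ∀ h : γ ε ≠ 0, Projectivization.mk K (γ ε) h ∈ T) : P ∈ zClosure T := by
  intro F hF hFT c
  have key : ∃ q : K[X], ∀ ε, F (c • γ ε) = q.eval ε := by
    clear hFT
    induction hF using Algebra.adjoin_induction with
    | mem g hg =>
      obtain ⟨φ, rfl⟩ := hg
      obtain ⟨q, hq⟩ := hpoly φ
      exact ⟨C c * q, fun ε => by rw [map_smul, hq]; simp⟩
    | algebraMap r => exact ⟨C r, fun ε => by simp⟩
    | add f g _ _ hf hg =>
      obtain ⟨q, hq⟩ := hf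
      obtain ⟨r, hr⟩ := hg
      exact ⟨q + r, fun ε => by rw [Pi.add_apply, hq, hr, eval_add]⟩
    | mul f g _ _ hf hg =>
      obtain ⟨q, hq⟩ := hf
      obtain ⟨r, hr⟩ := hg
      exact ⟨q * r, fun ε => by rw [Pi.mul_apply, hq, hr, eval_mul]⟩
  obtain ⟨q, hq⟩ := key
  have hq0 : q = 0 := by
    apply poly_zero_of_ne
    intro ε hε
    rw [← hq]
    by_cases h : γ ε = 0
    · obtain ⟨Q, hQ⟩ := hne
      have := hFT Q hQ 0
      rw [zero_smul] at this
      rw [h, smul_zero, this]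
    · have hQ := hT ε hε h
      obtain ⟨u, hu⟩ := Projectivization.exists_smul_eq_mk_rep K (γ ε) h
      have := hFT _ hQ (c * ((u⁻¹ : Kˣ) : K))
      rw [← hu, mul_smul, ← Units.smul_def, inv_smul_smul] at this
      exact this
  rw [← h0, hq, hq0]; simp

namespace Ctx
variable (X : Ctx K m b)

theorem vec_ne (τ : K) : X.a.rep + τ • X.v ≠ 0 := by
  intro h
  have h1 := rho_eval X.a.rep X.v X.y τ
  rw [X.ry, h] at h1
  have h2 := eval_smul_homog X.hy 0 0
  rw [smul_zero] at h2
  rw [h2] at h1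
  simp at h1

/-- points on the line -/
noncomputable def pt (τ : K) : Pm K m := Projectivization.mk K (X.a.rep + τ • X.v) (X.vec_ne τ)

theorem pt_rep (τ : K) : ∃ u : Kˣ, (X.pt τ).rep = u • (X.a.rep + τ • X.v) := by
  obtain ⟨u, hu⟩ := Projectivization.exists_smul_eq_mk_rep K _ (X.vec_ne τ)
  exact ⟨u, hu.symm⟩

theorem pt_mem (τ : K) : (X.pt τ).rep ∈ X.W := by
  obtain ⟨u, hu⟩ := X.pt_rep τ
  rw [hu, Units.smul_def]
  exact X.W.smul_mem _ (X.memW τ)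

theorem pt_eval {f : PR K m} {t : ℕ} (hf : f.IsHomogeneous t) (τ : K)
    (h : MvPolynomial.eval (X.pt τ).rep f = 0) : (rho X.a.rep X.v f).eval τ = 0 := by
  obtain ⟨u, hu⟩ := X.pt_rep τ
  rw [hu, Units.smul_def, eval_smul_homog hf, ← rho_eval] at h
  rcases mul_eq_zero.1 h with h | h
  · exact absurd h (pow_ne_zero _ u.ne_zero)
  · exact h

theorem sylv [IsAlgClosed K] [CharZero K] (d : ℕ) (hd : 2 * b + 2 ≤ d) :
    ∃ A : Finset (Pm K m), (∀ p ∈ A, p.rep ∈ X.W) ∧ A.card ≤ d + 2 - b ∧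
      ∀ f : PR K m, f.IsHomogeneous d → (∀ p ∈ A, MvPolynomial.eval p.rep f = 0) →
        X.Phi f = 0 := by
  classical
  obtain ⟨R, hR, h⟩ := sylvester b d X.hb hd X.c X.hc
  refine ⟨R.image X.pt, ?_, Finset.card_image_le.trans hR, ?_⟩
  · intro p hp
    obtain ⟨t, -, rfl⟩ := Finset.mem_image.1 hp
    exact X.pt_mem t
  · intro f hf hA
    refine h _ (rho_natDegree _ _ hf) fun t ht => X.pt_eval hf t ?_
    exact hA _ (Finset.mem_image_of_mem _ ht)

/-- the full functional -/
noncomputable def tot (f : PR K m) : K := X.Phi f + ∑ p ∈ X.E, X.e p * MvPolynomial.eval p.rep f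

/-- the modulus -/
noncomputable def modu (b : ℕ) (ε : K) : K[X] := ∏ j ∈ Finset.range b, (Polynomial.X - C ((j : K) * ε))

theorem modu_monic (b : ℕ) (ε : K) : (modu b ε).Monic :=
  monic_prod_of_monic _ _ fun _ _ => monic_X_sub_C _

/-- the deformation -/
noncomputable def curve (d : ℕ) (ε : K) : Module.Dual K (Hd K m d) :=
  (lc b X.c ∘ₗ (modByMonicHom (modu b ε)) ∘ₗ (rho X.a.rep X.v).toLinearMap) ∘ₗ (Hd K m d).subtype
    + ∑ p ∈ X.E, X.e p • nu d p.rep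

theorem curve_apply (d : ℕ) (ε : K) (f : Hd K m d) : X.curve d ε f =
    lc b X.c (rho X.a.rep X.v (f : PR K m) %ₘ modu b ε) +
      ∑ p ∈ X.E, X.e p * MvPolynomial.eval p.rep (f : PR K m) := by
  simp [curve, LinearMap.sum_apply, nu_apply]

theorem curve_zero (d : ℕ) (f : Hd K m d) : X.curve d 0 f = X.tot f := by
  rw [curve_apply, tot, Phi]
  congr 1
  have h1 : modu b (0 : K) = Polynomial.X ^ b := by simp [modu]
  conv_rhs => rw [← modByMonic_add_div (rho X.a.rep X.v (f : PR K m)) (modu b (0:K))]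
  rw [map_add, h1, lc_X_pow_zero _ _ _ _ le_rfl, add_zero]

theorem curve_poly (d : ℕ) (f : Hd K m d) : ∃ q : K[X], ∀ ε, X.curve d ε f = q.eval ε := by
  let GG : (K[X])[X] := ∏ j ∈ Finset.range b, (Polynomial.X - C (C (j : K) * Polynomial.X))
  have hGG : GG.Monic := monic_prod_of_monic _ _ fun _ _ => monic_X_sub_C _
  refine ⟨∑ i ∈ Finset.range b, C (X.c i) * (((rho X.a.rep X.v (f : PR K m)).map C) %ₘ GG).coeff i
    + C (∑ p ∈ X.E, X.e p * MvPolynomial.eval p.rep (f : PR K m)), fun ε => ?_⟩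
  rw [curve_apply, eval_add, eval_C, lc_apply, eval_finsetSum]
  congr 1
  refine Finset.sum_congr rfl fun i _ => ?_
  rw [eval_mul, eval_C]
  congr 1
  rw [← coe_evalRingHom, ← coeff_map, map_modByMonic _ hGG]
  congr 2
  · rw [Polynomial.map_map]
    have : (evalRingHom ε).comp C = RingHom.id K := by ext; simp
    rw [this, Polynomial.map_id]
  · simp [GG, modu, Polynomial.map_prod]

theorem brank_le_aux [CharZero K] (d : ℕ) (O : PN K m d)
    (hO : ∀ f : Hd K m d, O.rep f = X.tot f) : O ∈ secantWrt (XSet K m d) (X.E.card + b) := by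
  classical
  have hinf : Infinite K := inferInstance
  rw [XSet_eq, secantWrt]
  refine zClosure_of_curve _ O (X.curve d) ?_ ?_ ?_ ?_
  · ext f; rw [curve_zero, hO]
  · intro φ
    obtain ⟨f, rfl⟩ := (Module.evalEquiv K (Hd K m d)).surjective φ
    exact X.curve_poly d f
  · obtain ⟨S, h1, h2, h3⟩ := exists_S_of_A d Set.univ ({X.a} : Finset (Pm K m)) (by simp)
    refine ⟨Projectivization.mk K (nu d X.a.rep) (nu_ne_zero d _), S, h1, ?_, h3 ?_⟩
    · have := X.hb
      rw [Finset.card_singleton] at h2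
      omega
    · obtain ⟨u, hu⟩ := Projectivization.exists_smul_eq_mk_rep K _ (nu_ne_zero d X.a)
      rw [← hu, Units.smul_def]
      exact Submodule.smul_mem _ _ (Submodule.subset_span ⟨X.a, by simp, rfl⟩)
  · intro ε hε h
    obtain ⟨S, h1, h2, h3⟩ := exists_S_of_A d Set.univ
      ((Finset.range b).image (fun j : ℕ => X.pt ((j : K) * ε)) ∪ X.E) (by simp)
    refine ⟨S, h1, h2.trans ?_, h3 ?_⟩
    · refine (Finset.card_union_le _ _).trans ?_
      have := Finset.card_image_le (s := Finset.range b) (f := fun j : ℕ => X.pt ((j : K) * ε))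
      rw [Finset.card_range] at this
      omega
    · obtain ⟨u, hu⟩ := Projectivization.exists_smul_eq_mk_rep K _ h
      rw [← hu, Units.smul_def]
      refine Submodule.smul_mem _ _ ?_
      rw [mem_dualSpan]
      intro f hf
      rw [curve_apply, Finset.sum_eq_zero, add_zero]
      · have : modu b ε ∣ rho X.a.rep X.v (f : PR K m) := by
          refine Finset.prod_dvd_of_coprime ?_ ?_
          · intro i _ j _ hij
            refine pairwise_coprime_X_sub_C (s := fun j : ℕ => (j : K) * ε) ?_ hij
            intro i j hij
            exact_mod_cast mul_right_cancel₀ hε hij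
          · intro j hj
            rw [dvd_iff_isRoot]
            refine X.pt_eval f.2 _ (hf _ ?_)
            exact Finset.mem_coe.2 (Finset.mem_union_left _ (Finset.mem_image_of_mem _ hj))
        rw [(modByMonic_eq_zero_iff_dvd (modu_monic b ε)).2 this, map_zero]
      · intro p hp
        rw [hf p (Finset.mem_coe.2 (Finset.mem_union_right _ hp)), mul_zero]

end Ctx
end part7

section part8
open MvPolynomial
variable {K : Type} [Field K] {m b : ℕ}

theorem polyFun_det {V : Type} [AddCommGroup V] [Module K V] {ι : Type} [Fintype ι] [DecidableEq ι]
    (φ : ι → ι → V →ₗ[K] K) :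
    (fun w => (Matrix.of fun i j => φ i j w).det) ∈ polyFunctions K V := by
  have h : (fun w => (Matrix.of fun i j => φ i j w).det) =
      ∑ σ : Equiv.Perm ι, (Equiv.Perm.sign σ : ℤ) • ∏ i, (⇑(φ (σ i) i) : V → K) := by
    funext w
    rw [Matrix.det_apply]
    simp [Finset.sum_apply, Finset.prod_apply, Units.smul_def]
  rw [h]
  refine Subalgebra.sum_mem _ fun σ _ => ?_
  refine zsmul_mem ?_ _
  refine Subalgebra.prod_mem _ fun i _ => ?_
  exact Algebra.subset_adjoin ⟨φ (σ i) i, rfl⟩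

theorem det_zero_of_few {ι : Type} [Fintype ι] [DecidableEq ι] (A : Finset (Pm K m))
    (hA : A.card < Fintype.card ι) (c : Pm K m → K) (f g : ι → Pm K m → K) :
    (Matrix.of fun i j => ∑ p ∈ A, c p * (f i p * g j p)).det = 0 := by
  by_contra h
  let U : Matrix ι A K := Matrix.of fun i p => c p.1 * f i p.1
  let V : Matrix A ι K := Matrix.of fun p j => g j p.1
  have h1 : (Matrix.of fun i j => ∑ p ∈ A, c p * (f i p * g j p)) = U * V := by
    ext i j
    rw [Matrix.mul_apply, Matrix.of_apply, ← Finset.sum_coe_sort A]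
    refine Finset.sum_congr rfl fun p _ => ?_
    simp only [U, V, Matrix.of_apply]; ring
  have h2 := Matrix.rank_of_isUnit _ ((Matrix.isUnit_iff_isUnit_det _).2 (isUnit_iff_ne_zero.2 h))
  rw [h1] at h2
  have h3 := Matrix.rank_mul_le_left U V
  have h4 := Matrix.rank_le_card_width U
  rw [Fintype.card_coe] at h4
  omega

namespace Ctx
variable (X : Ctx K m b)

theorem a_notMem : X.a ∉ X.E := fun h => X.hE _ h X.haW

open scoped Classical in
/-- forms killing the line and all but one point -/
theorem pform (p : Pm K m) (hp : p ∈ X.E) (t : ℕ) (ht : X.E.card ≤ t) :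
    ∃ f : PR K m, f.IsHomogeneous t ∧ (∀ q ∈ X.W, eval q f = 0) ∧
      (∀ q ∈ X.E, q ≠ p → eval q.rep f = 0) ∧ eval p.rep f ≠ 0 := by
  obtain ⟨l, l1, l2, l3⟩ := exists_form_notMem X.W p.rep (X.hE p hp)
  have h1 : 0 < X.E.card := Finset.card_pos.2 ⟨p, hp⟩
  obtain ⟨g, g1, g2, g3⟩ := exists_sep (X.E.erase p) p (by simp) (t-1) (by
    rw [Finset.card_erase_of_mem hp]; omega)
  refine ⟨l * g, ?_, ?_, ?_, ?_⟩
  · have := l1.mul g1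
    rwa [show 1 + (t - 1) = t by omega] at this
  · intro q hq; rw [map_mul, l2 q hq, zero_mul]
  · intro q hq hqp; rw [map_mul, g2 q (Finset.mem_erase.2 ⟨hqp, hq⟩), mul_zero]
  · rw [map_mul]; exact mul_ne_zero l3 g3

theorem sum_single (p : Pm K m) (hp : p ∈ X.E) (f : PR K m)
    (hf : ∀ q ∈ X.E, q ≠ p → eval q.rep f = 0) :
    ∑ q ∈ X.E, X.e q * eval q.rep f = X.e p * eval p.rep f := by
  refine Finset.sum_eq_single_of_mem p hp fun q hq hqp => ?_
  rw [hf q hq hqp, mul_zero]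

open scoped Classical in
theorem forms [Infinite K] (d : ℕ) (hd : 2 * (X.E.card + b) + 2 ≤ d) :
    ∃ f g : Fin b ⊕ X.E → PR K m, (∀ i, (f i).IsHomogeneous (X.E.card + b - 1)) ∧
      (∀ j, (g j).IsHomogeneous (d - (X.E.card + b - 1))) ∧
      (Matrix.of fun i j => X.tot (f i * g j)).det ≠ 0 := by
  have hb := X.hb
  obtain ⟨h, h1, h2, h3⟩ := exists_sep X.E X.a X.a_notMem X.E.card le_rfl
  obtain ⟨h', h1', h2', h3'⟩ := exists_sep X.E X.a X.a_notMem
    (d - (X.E.card + b - 1) - (b - 1)) (by omega)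
  choose! F F1 F2 F3 F4 using fun p hp => X.pform p hp (X.E.card + b - 1) (by omega)
  choose! G G1 G2 G3 G4 using fun p hp => X.pform p hp (d - (X.E.card + b - 1)) (by omega)
  refine ⟨Sum.elim (fun i => X.x ^ (i : ℕ) * X.y ^ (b - 1 - i) * h) (fun p => F p),
    Sum.elim (fun j => X.x ^ (b - 1 - j) * X.y ^ (j : ℕ) * h') (fun p => G p), ?_, ?_, ?_⟩
  · rintro (i | p)
    · have := ((X.hx.pow i).mul (X.hy.pow (b-1-i))).mul h1
      have hi := i.2
      rwa [show 1 * (i : ℕ) + 1 * (b - 1 - i) + X.E.card = X.E.card + b - 1 by omega] at this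
    · exact F1 p p.2
  · rintro (i | p)
    · have := ((X.hx.pow (b-1-i)).mul (X.hy.pow i)).mul h1'
      have hi := i.2
      rwa [show 1 * (b - 1 - i) + 1 * (i : ℕ) + (d - (X.E.card + b - 1) - (b - 1))
        = d - (X.E.card + b - 1) by omega] at this
    · exact G1 p p.2
  let A : Matrix (Fin b) (Fin b) K := Matrix.of fun i j =>
    X.tot (X.x ^ (i : ℕ) * X.y ^ (b - 1 - i) * h * (X.x ^ (b - 1 - j) * X.y ^ (j : ℕ) * h'))
  let D : Matrix X.E X.E K := Matrix.diagonal fun p =>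
    X.e p * (eval p.1.rep (F p) * eval p.1.rep (G p))
  have hM : (Matrix.of fun i j => X.tot
      ((Sum.elim (fun i : Fin b => X.x ^ (i : ℕ) * X.y ^ (b - 1 - i) * h) (fun p : X.E => F p) : _ → PR K m) i *
      (Sum.elim (fun j : Fin b => X.x ^ (b - 1 - j) * X.y ^ (j : ℕ) * h') (fun p : X.E => G p) : _ → PR K m) j))
      = Matrix.fromBlocks A 0 0 D := by
    ext i j
    rcases i with i | p <;> rcases j with j | q
    · rfl
    · simp only [Matrix.of_apply, Sum.elim_inl, Sum.elim_inr, Matrix.fromBlocks_apply₁₂,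
        Matrix.zero_apply, tot]
      rw [X.phi_zero, Finset.sum_eq_zero, add_zero]
      · intro p hp; simp [h2 p hp]
      · intro p hp; simp [G2 q q.2 p hp]
    · simp only [Matrix.of_apply, Sum.elim_inl, Sum.elim_inr, Matrix.fromBlocks_apply₂₁,
        Matrix.zero_apply, tot]
      rw [X.phi_zero, Finset.sum_eq_zero, add_zero]
      · intro p hp; simp [h2' p hp]
      · intro q hq; simp [F2 p p.2 q hq]
    · simp only [Matrix.of_apply, Sum.elim_inr, Matrix.fromBlocks_apply₂₂, tot, D]
      rw [X.phi_zero (fun r hr => by simp [F2 p p.2 r hr]), zero_add,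
        X.sum_single p p.2 _ (fun r hr hrp => by simp [F3 p p.2 r hr hrp])]
      by_cases hpq : p = q
      · subst hpq; simp
      · rw [Matrix.diagonal_apply_ne _ hpq, map_mul,
          G3 q q.2 p p.2 (fun h => hpq (Subtype.ext h)), mul_zero, mul_zero]
  rw [hM, Matrix.det_fromBlocks_zero₂₁, Matrix.det_diagonal]
  have hA : ∀ i j : Fin b, A i j = lc b X.c (Polynomial.X ^ ((i : ℕ) + (b - 1 - j)) *
      (rho X.a.rep X.v h * rho X.a.rep X.v h')) := by
    intro i j
    simp only [A, Matrix.of_apply, tot, Phi]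
    rw [Finset.sum_eq_zero (fun p hp => by simp [h2 p hp]), add_zero]
    congr 1
    simp only [map_mul, map_pow, X.rx, X.ry, one_pow, pow_add]
    ring
  refine mul_ne_zero ?_ ?_
  · rw [Matrix.det_of_isUpperTriangular]
    · refine Finset.prod_ne_zero_iff.2 fun i _ => ?_
      have hi := i.2
      rw [hA, show (i : ℕ) + (b - 1 - i) = b - 1 by omega, lc_X_pow _ _ _ (by omega),
        Polynomial.mul_coeff_zero, rho_coeff_zero, rho_coeff_zero]
      exact mul_ne_zero X.hc (mul_ne_zero h3 h3')
    · intro i j hij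
      have hij' : (j : ℕ) < i := hij
      have hj := i.2
      rw [hA, lc_X_pow_zero _ _ _ _ (by omega)]
  · refine Finset.prod_ne_zero_iff.2 fun p _ => ?_
    exact mul_ne_zero (X.he p p.2) (mul_ne_zero (F4 p p.2) (G4 p p.2))

theorem brank_ge_aux [Infinite K] (d : ℕ) (hd : 2 * (X.E.card + b) + 2 ≤ d) (O : PN K m d)
    (hO : ∀ f : Hd K m d, O.rep f = X.tot f) (r : ℕ) (hr : r < X.E.card + b) :
    O ∉ secantWrt (XSet K m d) r := by
  classical
  intro hmem
  obtain ⟨f, g, hf, hg, hdet⟩ := X.forms d hd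
  have hfg : ∀ i j, (f i * g j).IsHomogeneous d := by
    intro i j
    have := (hf i).mul (hg j)
    rwa [show X.E.card + b - 1 + (d - (X.E.card + b - 1)) = d by omega] at this
  let φ : (Fin b ⊕ X.E) → (Fin b ⊕ X.E) → Module.Dual K (Hd K m d) →ₗ[K] K :=
    fun i j => Module.Dual.eval K (Hd K m d) ⟨f i * g j, hfg i j⟩
  have hF := polyFun_det φ
  have h1 := hmem _ hF (by
    rintro Q ⟨S, hS, hSc, hQ⟩ c
    rw [XSet_eq] at hS
    obtain ⟨A, -, hAc, hA⟩ := exists_A_of_S d Set.univ S hS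
    obtain ⟨γ, hγ⟩ := dualSpan_sum d A (c • Q.rep) (Submodule.smul_mem _ _ (hA hQ))
    have h2 := det_zero_of_few (ι := Fin b ⊕ X.E) A (by
      rw [Fintype.card_sum, Fintype.card_fin, Fintype.card_coe]; omega) γ
      (fun i p => eval p.rep (f i)) (fun j p => eval p.rep (g j))
    rw [← h2]
    congr 1
    ext i j
    simp only [Matrix.of_apply, φ, Module.Dual.eval_apply]
    rw [hγ, LinearMap.sum_apply]
    refine Finset.sum_congr rfl fun p _ => ?_
    rw [LinearMap.smul_apply, nu_apply, map_mul, smul_eq_mul]) 1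
  apply hdet
  rw [← h1, one_smul]
  congr 1
  ext i j
  simp only [Matrix.of_apply, φ, Module.Dual.eval_apply]
  rw [hO]

theorem brank_eq [CharZero K] (d : ℕ) (hd : 2 * (X.E.card + b) + 2 ≤ d) (O : PN K m d)
    (hO : ∀ f : Hd K m d, O.rep f = X.tot f) : brank d O = X.E.card + b := by
  have hb := X.hb
  have hinf : Infinite K := inferInstance
  have hmem : X.E.card + b ∈ {s | 0 < s ∧ O ∈ secantWrt (XSet K m d) s} :=
    ⟨by omega, X.brank_le_aux d O hO⟩
  refine le_antisymm (Nat.sInf_le hmem) (le_csInf ⟨_, hmem⟩ ?_)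
  rintro r ⟨-, hr⟩
  by_contra hlt
  exact X.brank_ge_aux d hd O hO r (by omega) hr

end Ctx
end part8

section part9
open MvPolynomial
variable {K : Type} [Field K] {m b : ℕ}

theorem mem_line {L : Set (Pm K m)} {W : Submodule K (Fin (m+1) → K)}
    (hLW : L = {a | a.submodule ≤ W}) (a : Pm K m) : a ∈ L ↔ a.rep ∈ W := by
  rw [hLW, Set.mem_setOf_eq, Projectivization.submodule_eq, Submodule.span_singleton_le_iff_mem]

/-- thickened point ideal -/
noncomputable def powI (u v : Fin (m+1) → K) (k : ℕ) : Ideal (PR K m) :=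
  hspan ((Ideal.span {(Polynomial.X : Polynomial K) ^ k}).comap (rho u v))

theorem mem_powI (u v : Fin (m+1) → K) (k : ℕ) {f : PR K m} {n : ℕ} (hf : f.IsHomogeneous n) :
    f ∈ powI u v k ↔ Polynomial.X ^ k ∣ rho u v f := by
  constructor
  · intro h
    have := hspan_le _ h
    rwa [Ideal.mem_comap, Ideal.mem_span_singleton] at this
  · intro h
    apply mem_hspan hf
    rwa [Ideal.mem_comap, Ideal.mem_span_singleton]

theorem powI_sat (u v : Fin (m+1) → K) (hu : u ≠ 0) (k : ℕ) : IsSatI (powI u v k) := by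
  apply hspan_sat
  intro f hf
  obtain ⟨i, hi⟩ := Function.ne_iff.1 hu
  have h1 := hf i
  rw [Ideal.mem_comap, Ideal.mem_span_singleton, map_mul] at h1
  rw [Ideal.mem_comap, Ideal.mem_span_singleton]
  refine Polynomial.prime_X.pow_dvd_of_dvd_mul_left k ?_ h1
  rw [Polynomial.X_dvd_iff, rho_coeff_zero, eval_X]
  exact hi

theorem inf_homog {I J : Ideal (PR K m)} (hI : IsHomogI I) (hJ : IsHomogI J) :
    IsHomogI (I ⊓ J) := fun f hf n => ⟨hI f hf.1 n, hJ f hf.2 n⟩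

theorem inf_sat {I J : Ideal (PR K m)} (hI : IsSatI I) (hJ : IsSatI J) :
    IsSatI (I ⊓ J) := fun f hf => ⟨hI f fun i => (hf i).1, hJ f fun i => (hf i).2⟩

theorem phi_eq (Z : PSub K m) (d : ℕ) (u v : Fin (m+1) → K) (x y : PR K m)
    (hx : x.IsHomogeneous 1) (hy : y.IsHomogeneous 1) (rx : rho u v x = Polynomial.X)
    (ry : rho u v y = 1) (hbd : b ≤ d)
    (hZ : ∀ f n, f.IsHomogeneous n → (f ∈ Z.I ↔ Polynomial.X ^ b ∣ rho u v f))
    (φ : Module.Dual K (Hd K m d)) (hφ : φ ∈ schemeSpanSub Z.I d) :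
    ∃ c : ℕ → K, ∀ f : Hd K m d, φ f = lc b c (rho u v (f : PR K m)) := by
  let w : ℕ → Hd K m d := fun i => ⟨homg x y d (Polynomial.X ^ i), homg_homog hx hy _ _⟩
  refine ⟨fun i => φ (w i), fun f => ?_⟩
  let f' : Hd K m d := f - ∑ i ∈ Finset.range b, (rho u v (f : PR K m)).coeff i • w i
  have h1 : φ f' = 0 := by
    apply hφ
    rw [hZ _ d f'.2, Polynomial.X_pow_dvd_iff]
    intro k hk
    have h2 : rho u v (f' : PR K m) = rho u v (f : PR K m) - ∑ i ∈ Finset.range b,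
        (rho u v (f : PR K m)).coeff i • Polynomial.X ^ i := by
      simp only [f', Submodule.coe_sub, Submodule.coe_sum, Submodule.coe_smul, map_sub, map_sum,
        map_smul, w]
      congr 1
      refine Finset.sum_congr rfl fun i hi => ?_
      rw [Finset.mem_range] at hi
      rw [rho_homg rx ry _ _ (by rw [Polynomial.natDegree_X_pow]; omega)]
    rw [h2, Polynomial.coeff_sub, Polynomial.finset_sum_coeff,
      Finset.sum_eq_single_of_mem k (Finset.mem_range.2 hk)]
    · simp
    · intro i _ hik
      rw [Polynomial.coeff_smul, Polynomial.coeff_X_pow, if_neg (Ne.symm hik), smul_zero]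
  simp only [f', map_sub, map_sum, map_smul, sub_eq_zero] at h1
  rw [h1, lc_apply]
  exact Finset.sum_congr rfl fun i _ => by rw [smul_eq_mul, mul_comm]

namespace Ctx
variable (X : Ctx K m b)

theorem O_mem [Infinite K] (d : ℕ) (O : PN K m d) (hO : ∀ f : Hd K m d, O.rep f = X.tot f)
    (A : Finset (Pm K m)) (S : Set (Pm K m)) (hAS : ∀ p ∈ A, p ∈ S) (hES : ∀ p ∈ X.E, p ∈ S)
    (hA : ∀ f : PR K m, f.IsHomogeneous d → (∀ p ∈ A, eval p.rep f = 0) → X.Phi f = 0) :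
    O.rep ∈ dualSpan d S := by
  rw [mem_dualSpan]
  intro f hf
  rw [hO, tot, hA _ f.2 fun p hp => hf p (hAS p hp), zero_add]
  exact Finset.sum_eq_zero fun p hp => by rw [hf p (hES p hp), mul_zero]

theorem srank_eq [IsAlgClosed K] [CharZero K] (d : ℕ) (hd : 2 * (X.E.card + b) + 2 ≤ d)
    (O : PN K m d) (hO : ∀ f : Hd K m d, O.rep f = X.tot f) :
    srank d O + b = d + 2 + X.E.card := by
  classical
  have hinf : Infinite K := inferInstance
  have hb := X.hb
  obtain ⟨A, hA1, hA2, hA3⟩ := X.sylv d (by omega)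
  have hmem := X.O_mem d O hO A (↑(A ∪ X.E)) (fun p hp => by simp [hp]) (fun p hp => by simp [hp]) hA3
  have h1 := rankW_le d Set.univ (A ∪ X.E) (by simp) O hmem
  have h2 := rankW_ge d Set.univ O (d + 2 + X.E.card - b) (A ∪ X.E) (by simp) hmem (by
    intro B _ hB
    obtain ⟨α, hα⟩ := dualSpan_sum d B _ hB
    have := X.sr_lower d hd B α (by
      intro f hf
      have h := hO ⟨f, hf⟩
      rw [tot] at h
      rw [← h, hα, LinearMap.sum_apply]
      refine Finset.sum_congr rfl fun p _ => ?_
      rw [LinearMap.smul_apply, nu_apply, smul_eq_mul])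
    omega)
  have h3 := Finset.card_union_le A X.E
  rw [srank, XSet_eq]
  omega

theorem more [IsAlgClosed K] [CharZero K] (d : ℕ) (hd : 2 * (X.E.card + b) + 2 ≤ d)
    (O : PN K m d) (hO : ∀ f : Hd K m d, O.rep f = X.tot f) (L : Set (Pm K m))
    (hL : ∀ a, a ∈ L ↔ a.rep ∈ X.W) (Q : PN K m d)
    (hQ : Q.rep ∈ Submodule.span K
      (insert O.rep ((fun a => nu d a.rep) '' (↑X.E : Set (Pm K m)))))
    (hQL : inSpanSet d L Q) (A' : Finset (Pm K m))
    (hr : rankWrt (nuSet d L) Q = A'.card)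
    (hA' : inSpanSet d (↑A' : Set (Pm K m)) Q) (S : Finset (Pm K m))
    (hS : S.card ≤ A'.card + X.E.card) (hAS : ∀ p ∈ A', p ∈ S) (hES : ∀ p ∈ X.E, p ∈ S) :
    srank d O = S.card ∧ inSpanSet d (↑S : Set (Pm K m)) O := by
  have hinf : Infinite K := inferInstance
  have hb := X.hb
  obtain ⟨α, z, hz, hQz⟩ := Submodule.mem_span_insert.1 hQ
  obtain ⟨β, hβ⟩ := dualSpan_sum d X.E z hz
  have hQf : ∀ f : Hd K m d, Q.rep f =
      α * X.Phi f + ∑ p ∈ X.E, (α * X.e p + β p) * eval p.rep (f : PR K m) := by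
    intro f
    rw [hQz, hβ, LinearMap.add_apply, LinearMap.smul_apply, hO, LinearMap.sum_apply, tot, smul_eq_mul,
      mul_add, add_assoc, Finset.mul_sum, ← Finset.sum_add_distrib]
    congr 1
    refine Finset.sum_congr rfl fun p _ => ?_
    rw [LinearMap.smul_apply, nu_apply, smul_eq_mul]; ring
  have hco : ∀ p ∈ X.E, α * X.e p + β p = 0 := by
    intro p hp
    obtain ⟨f, f1, f2, f3, f4⟩ := X.pform p hp d (by omega)
    have h1 := (mem_dualSpan d L _).1 hQL ⟨f, f1⟩ (fun a ha => f2 _ ((hL a).1 ha))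
    rw [hQf, X.phi_zero f2, mul_zero, zero_add, Finset.sum_eq_single_of_mem p hp] at h1
    · exact (mul_eq_zero.1 h1).resolve_right f4
    · intro q hq hqp
      rw [f3 q hq hqp, mul_zero]
  have hQf' : ∀ f : Hd K m d, Q.rep f = α * X.Phi f := by
    intro f
    rw [hQf, Finset.sum_eq_zero, add_zero]
    intro p hp; rw [hco p hp, zero_mul]
  have hα : α ≠ 0 := by
    rintro rfl
    apply Q.rep_nonzero
    ext f
    rw [hQf', zero_mul]; rfl
  have hphi : ∀ f : PR K m, f.IsHomogeneous d → (∀ p ∈ A', eval p.rep f = 0) → X.Phi f = 0 := by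
    intro f hf h
    have h1 := (mem_dualSpan d _ _).1 hA' ⟨f, hf⟩ h
    rw [hQf'] at h1
    exact (mul_eq_zero.1 h1).resolve_left hα
  have hmem := X.O_mem d O hO A' (↑S) hAS hES hphi
  refine ⟨?_, hmem⟩
  have h1 := X.srank_eq d hd O hO
  have h2 := rankW_le d Set.univ S (by simp) O hmem
  rw [← XSet_eq] at h2
  obtain ⟨A, hA1, hA2, hA3⟩ := X.sylv d (by omega)
  have h3 := rankW_le d L A (fun p hp => (hL p).2 (hA1 p hp)) Q (by
    rw [mem_dualSpan]
    intro f hf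
    rw [hQf', hA3 _ f.2 hf, mul_zero])
  have h4 : srank d O ≤ S.card := h2
  omega

end Ctx

theorem exists_ctx [IsAlgClosed K] [CharZero K] (d : ℕ) (hb2 : 2 ≤ b) (hbd : b ≤ d)
    (L : Set (Pm K m)) (W : Submodule K (Fin (m+1) → K)) (hW : Module.finrank K W = 2)
    (hLW : L = {a | a.submodule ≤ W})
    (Z' : PSub K m) (hZL : idealOfSet L ≤ Z'.I) 
    (hZconn : ∃ a : Pm K m, pzeroLocus Z'.I = {a}) (hZdeg : idealDeg Z'.I = b)
    (E : Finset (Pm K m)) (hEL : ∀ a ∈ E, a ∉ L) 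
    (O : PN K m d)
    (hO : inSpanI (Z'.I ⊓ idealOfSet (↑E : Set (Pm K m))) d O)
    (hOmin : ∀ F : PSub K m, Z'.I ⊓ idealOfSet (↑E : Set (Pm K m)) < F.I →
      ¬ inSpanI F.I d O) :
    ∃ X : Ctx K m b, X.W = W ∧ X.E = E ∧ ∀ f : Hd K m d, O.rep f = X.tot f := by
  classical
  have hinf : Infinite K := inferInstance
  obtain ⟨a, ha⟩ := hZconn
  obtain ⟨v, x, y, hWs, hli, hx, hy, rx, ry, hZ⟩ := Z_struct Z' L W hW hLW hZL a ha b hZdeg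
  obtain ⟨φ, hφ, e, hOe⟩ := scheme_decomp Z'.I E d O.rep hO
  obtain ⟨c, hc⟩ := phi_eq Z' d a.rep v x y hx hy rx ry hbd hZ φ hφ
  have hE : ∀ p ∈ E, p.rep ∉ W := fun p hp h => hEL p hp ((mem_line hLW p).2 h)
  let X0 : Ctx K m b := ⟨a, v, x, y, W, E, fun _ => 1, fun _ => 1, hWs, hW, hx, hy, rx, ry, hE,
    one_ne_zero, fun _ _ => one_ne_zero, hb2⟩
  have hOf : ∀ f : Hd K m d, O.rep f = lc b c (rho a.rep v (f : PR K m)) +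
      ∑ p ∈ E, e p * eval p.rep (f : PR K m) := by
    intro f
    rw [hOe, LinearMap.add_apply, hc, LinearMap.sum_apply]
    congr 1
  have hcb : c (b-1) ≠ 0 := by
    intro h0
    refine hOmin ⟨powI a.rep v (b-1) ⊓ idealOfSet (↑E : Set (Pm K m)),
      inf_homog (hspan_homog _) (idealOfSet_homog _),
      inf_sat (powI_sat _ _ a.rep_nonzero _) (idealOfSet_sat _)⟩ ?_ ?_
    · refine lt_of_le_not_ge ?_ ?_
      · refine inf_le_inf_right _ fun f hf => mem_of_components fun n => ?_
        have hn := homogeneousComponent_isHomogeneous n f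
        rw [powI, ← powI, mem_powI _ _ _ hn]
        exact (pow_dvd_pow _ (by omega)).trans ((hZ _ n hn).1 (Z'.homog f hf n))
      · intro hle
        obtain ⟨h, h1, h2, h3⟩ := exists_sep E a X0.a_notMem E.card le_rfl
        have hh := (hx.pow (b-1)).mul h1
        have h4 : x ^ (b-1) * h ∈ powI a.rep v (b-1) ⊓ idealOfSet (↑E : Set (Pm K m)) := by
          refine ⟨(mem_powI _ _ _ hh).2 ?_, (mem_idealOfSet hh).2 ?_⟩
          · rw [map_mul, map_pow, rx]; exact dvd_mul_right _ _
          · intro p hp; rw [map_mul, h2 p hp, mul_zero]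
        have h5 := (hZ _ _ hh).1 (hle h4).1
        rw [map_mul, map_pow, rx, show b = (b - 1) + 1 by omega, pow_succ,
          Nat.add_sub_cancel] at h5
        have h6 := (mul_dvd_mul_iff_left (pow_ne_zero _ Polynomial.X_ne_zero)).1 h5
        rw [Polynomial.X_dvd_iff, rho_coeff_zero] at h6
        exact h3 h6
    · intro f hf
      obtain ⟨q, hq⟩ := (mem_powI _ _ _ f.2).1 hf.1
      rw [hOf, hq, lc_X_pow _ _ _ (by omega), h0, zero_mul, zero_add]
      exact Finset.sum_eq_zero fun p hp => by rw [(mem_idealOfSet f.2).1 hf.2 p hp, mul_zero]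
  have he : ∀ p ∈ E, e p ≠ 0 := by
    intro p hp h0
    refine hOmin ⟨Z'.I ⊓ idealOfSet (↑(E.erase p) : Set (Pm K m)),
      inf_homog Z'.homog (idealOfSet_homog _), inf_sat Z'.sat (idealOfSet_sat _)⟩ ?_ ?_
    · refine lt_of_le_not_ge ?_ ?_
      · refine inf_le_inf_left _ (Ideal.span_mono ?_)
        rintro f ⟨hf, h⟩
        exact ⟨hf, fun q hq => h q (Finset.mem_coe.2 (Finset.mem_of_mem_erase (Finset.mem_coe.1 hq)))⟩
      · intro hle
        obtain ⟨f, f1, f2, f3, f4⟩ := X0.pform p hp E.card le_rfl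
        have h4 : f ∈ Z'.I ⊓ idealOfSet (↑(E.erase p) : Set (Pm K m)) := by
          refine ⟨(hZ _ _ f1).2 ?_, (mem_idealOfSet f1).2 ?_⟩
          · rw [show rho a.rep v f = 0 from X0.rho_zero f2]; exact dvd_zero _
          · intro q hq
            have hq := Finset.mem_erase.1 (Finset.mem_coe.1 hq)
            exact f3 q hq.2 hq.1
        exact f4 ((mem_idealOfSet f1).1 (hle h4).2 p hp)
    · intro f hf
      obtain ⟨q, hq⟩ := (hZ _ _ f.2).1 hf.1
      rw [hOf, hq, lc_X_pow_zero _ _ _ _ le_rfl, zero_add]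
      refine Finset.sum_eq_zero fun q hq => ?_
      by_cases hqp : q = p
      · rw [hqp, h0, zero_mul]
      · rw [(mem_idealOfSet f.2).1 hf.2 q (Finset.mem_coe.2 (Finset.mem_erase.2 ⟨hqp, hq⟩)),
          mul_zero]
  exact ⟨⟨a, v, x, y, W, E, c, e, hWs, hW, hx, hy, rx, ry, hE, hcb, he, hb2⟩, rfl, rfl, hOf⟩

end part9

open scoped Classical in
/-- Step (a), Claims 1 and 2, of the proof of the main theorem: for a connected degree-`b`
subscheme `Z'` of a line `L` and a finite set `E ⊂ ℙ^m ∖ L` with `#E = s - b`, any point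
`O ∈ ⟨ν_d(Z' ∪ E)⟩` lying in the span of no proper subscheme has `br(O) = s` and
`sr(O) = (d+2-b) + (s-b)`; moreover if `A' ⊂ L` evinces the rank, with respect to the
rational normal curve `ν_d(L)`, of the point `Q = ⟨{O} ∪ ν_d(E)⟩ ∩ ⟨ν_d(L)⟩`, then
`A' ∪ E` evinces `sr(O)`. -/
theorem stmt19 (K : Type) [Field K] [IsAlgClosed K] [CharZero K]
    (m s d b : ℕ) (hm : 2 ≤ m) (hs : 4 ≤ s) (hd : 2 * s + 2 ≤ d)
    (hb2 : 2 ≤ b) (hbs : b ≤ s)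
    (L : Set (Pm K m)) (hL : IsLine L)
    (Z' : PSub K m) (hZL : idealOfSet L ≤ Z'.I) (hZz : IsZeroDimI Z'.I)
    (hZconn : ∃ a : Pm K m, pzeroLocus Z'.I = {a}) (hZdeg : idealDeg Z'.I = b)
    (E : Finset (Pm K m)) (hEL : ∀ a ∈ E, a ∉ L) (hEcard : E.card + b = s)
    (O : PN K m d)
    (hO : inSpanI (Z'.I ⊓ idealOfSet (↑E : Set (Pm K m))) d O)
    (hOmin : ∀ F : PSub K m, Z'.I ⊓ idealOfSet (↑E : Set (Pm K m)) < F.I →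
      ¬ inSpanI F.I d O) :
    brank d O = s ∧ srank d O + 2 * b = d + 2 + s ∧
    ∀ Q : PN K m d,
      (Q.rep ∈ Submodule.span K (insert O.rep ((fun a => nu d a.rep) '' (↑E : Set (Pm K m)))) ∧
        inSpanSet d L Q) →
      ∀ A' : Finset (Pm K m), (↑A' : Set (Pm K m)) ⊆ L →
        rankWrt (nuSet d L) Q = A'.card → inSpanSet d (↑A' : Set (Pm K m)) Q →
        srank d O = (A' ∪ E).card ∧ inSpanSet d (↑(A' ∪ E) : Set (Pm K m)) O := by
  obtain ⟨W, hW, hLW⟩ := hL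
  obtain ⟨X, hXW, hXE, hXO⟩ := exists_ctx d hb2 (by omega) L W hW hLW Z' hZL hZconn hZdeg E hEL O
    hO hOmin
  have hcard : X.E.card + b = s := by rw [hXE]; exact hEcard
  refine ⟨?_, ?_, ?_⟩
  · rw [X.brank_eq d (by omega) O hXO, hcard]
  · have := X.srank_eq d (by omega) O hXO
    omega
  · rintro Q ⟨hQ, hQL⟩ A' hA'L hr hA'
    subst hXE
    subst hXW
    refine X.more d (by omega) O hXO L (mem_line hLW) Q hQ hQL A' hr hA' _
      (Finset.card_union_le _ _) (fun p hp => Finset.mem_union_left _ hp)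
      (fun p hp => Finset.mem_union_right _ hp)
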